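/- arXiv:2505.11226 — 2 statements merged into one kernel-verified Lean document; each statement's English description precedes it below -/
import Mathlib

section
/- Fix integers n ≥ 2, D ≥ 2 and k₁,…,kₙ ≥ 1. Let M denote the set of polynomials F ∈ ℤ[Y,X₁,…,Xₙ] that are monic in Y with deg_Y F = D and deg_{X_i} F ≤ k_i for i = 1,…,n. Then there is a constant C, depending only on n, D, k₁,…,kₙ, such that for every real T ≥ 1: #{F ∈ M : ‖F‖ ≤ T and F is not strongly (1,n)-allowable} ≤ (C/T) · #{F ∈ M : ‖F‖ ≤ T}. -/
open Polynomial

noncomputable section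

/-- The rational function field `ℚ(X₁,…,Xₙ)`. -/
abbrev RF (n : ℕ) := FractionRing (MvPolynomial (Fin n) ℚ)

/-- Base change a polynomial `F ∈ ℤ[Y,X₁,…,Xₙ]` (written as a polynomial in `Y`
with coefficients in `ℤ[X₁,…,Xₙ]`) to `ℚ[Y,X₁,…,Xₙ]`. -/
def toQ {n : ℕ} (F : Polynomial (MvPolynomial (Fin n) ℤ)) :
    Polynomial (MvPolynomial (Fin n) ℚ) :=
  F.map (MvPolynomial.map (Int.castRingHom ℚ))

/-- View a polynomial in `ℚ[X][Y]` as a polynomial in `ℚ(X)[Y]`. -/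
def toFracQ {n : ℕ} (F : Polynomial (MvPolynomial (Fin n) ℚ)) : Polynomial (RF n) :=
  F.map (algebraMap (MvPolynomial (Fin n) ℚ) (RF n))

/-- View a polynomial in `ℤ[X][Y]` as a polynomial in `ℚ(X)[Y]`. -/
def toFrac {n : ℕ} (F : Polynomial (MvPolynomial (Fin n) ℤ)) : Polynomial (RF n) :=
  toFracQ (toQ F)

/-- The degree of `F(Y,X)` in the variable `Xᵢ`. -/
def degX {n : ℕ} {R : Type*} [CommSemiring R]
    (F : Polynomial (MvPolynomial (Fin n) R)) (i : Fin n) : ℕ :=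
  F.support.sup fun k => (F.coeff k).degreeOf i

/-- The total degree of `F(Y,X₁,…,Xₙ)` as a polynomial in `n+1` variables. -/
def totalDeg {n : ℕ} {R : Type*} [CommSemiring R]
    (F : Polynomial (MvPolynomial (Fin n) R)) : ℕ :=
  F.support.sup fun k => k + (F.coeff k).totalDegree

/-- `‖g‖`: the maximum absolute value of a coefficient of `g ∈ ℤ[X₁,…,Xₙ]`. -/
def mvNorm {n : ℕ} (g : MvPolynomial (Fin n) ℤ) : ℕ :=
  g.support.sup fun m => (g.coeff m).natAbs

/-- `‖F‖`: the maximum absolute value of a coefficient of `F ∈ ℤ[Y,X₁,…,Xₙ]`. -/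
def polyNorm {n : ℕ} (F : Polynomial (MvPolynomial (Fin n) ℤ)) : ℕ :=
  F.support.sup fun k => mvNorm (F.coeff k)

/-- The counting function
`N(F,B) = #{x ∈ ℤⁿ ∩ [−B,B]ⁿ : ∃ y ∈ ℤ, F(y,x) = 0}`. -/
def NFB {n : ℕ} (F : Polynomial (MvPolynomial (Fin n) ℤ)) (B : ℝ) : ℕ :=
  Set.ncard {x : Fin n → ℤ | (∀ i, |(x i : ℝ)| ≤ B) ∧
    ∃ y : ℤ, Polynomial.eval y (F.map (MvPolynomial.eval x)) = 0}

/-- `F ∈ ℤ[Y,X₁,…,Xₙ]` is absolutely irreducible: irreducible over `ℚ̄`. -/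
def AbsIrred {n : ℕ} (F : Polynomial (MvPolynomial (Fin n) ℤ)) : Prop :=
  Irreducible (F.map (MvPolynomial.map (Int.castRingHom (AlgebraicClosure ℚ))))

/-- `G` has positive degree in `Y` and in each variable `Xᵢ`. -/
def AllPosDeg {n : ℕ} (G : Polynomial (MvPolynomial (Fin n) ℤ)) : Prop :=
  0 < G.natDegree ∧ ∀ i : Fin n, 0 < degX G i

/-- A field extension `M` of `ℚ(X₁,…,Xₙ)` is an `n`-genuine extension: every
`G ∈ ℤ[Y,X₁,…,Xₙ]` irreducible over `ℚ(X)` with `M ≅ ℚ(X)[Y]/(G)` has positive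
degree in each of `Y, X₁, …, Xₙ`. -/
def IsGenuineExt (n : ℕ) (M : Type*) [Field M] [Algebra (RF n) M] : Prop :=
  ∀ G : Polynomial (MvPolynomial (Fin n) ℤ), Irreducible (toFrac G) →
    Nonempty (AdjoinRoot (toFrac G) ≃ₐ[RF n] M) → AllPosDeg G

/-- A field extension `M` of `ℚ(X₁,…,Xₙ)` is strongly `n`-genuine: every
intermediate field strictly containing `ℚ(X)` is `n`-genuine. -/
def IsStronglyGenuineExt (n : ℕ) (M : Type*) [Field M] [Algebra (RF n) M] : Prop :=
  ∀ M' : IntermediateField (RF n) M, M' ≠ ⊥ → IsGenuineExt n M'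

/-- The extension `ℚ(X)[Y]/(Fq)` presented by `Fq ∈ ℚ[X][Y]` is `n`-genuine. -/
def GenuineExtOfQ {n : ℕ} (Fq : Polynomial (MvPolynomial (Fin n) ℚ)) : Prop :=
  ∀ G : Polynomial (MvPolynomial (Fin n) ℤ), Irreducible (toFrac G) →
    Nonempty (AdjoinRoot (toFrac G) ≃ₐ[RF n] AdjoinRoot (toFracQ Fq)) → AllPosDeg G

/-- The extension `ℚ(X)[Y]/(Fq)` presented by `Fq ∈ ℚ[X][Y]` is strongly
`n`-genuine: for any field `M` isomorphic over `ℚ(X)` to `ℚ(X)[Y]/(Fq)`, every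
intermediate field strictly containing `ℚ(X)` is `n`-genuine. -/
def StronglyGenuineExtOfQ {n : ℕ} (Fq : Polynomial (MvPolynomial (Fin n) ℚ)) : Prop :=
  ∀ (M : Type) [Field M] [Algebra (RF n) M],
    Nonempty (AdjoinRoot (toFracQ Fq) ≃ₐ[RF n] M) → IsStronglyGenuineExt n M

/-- An absolutely irreducible `F ∈ ℤ[Y,X₁,…,Xₙ]` is an `n`-genuine polynomial. -/
def IsGenuinePoly {n : ℕ} (F : Polynomial (MvPolynomial (Fin n) ℤ)) : Prop :=
  AbsIrred F ∧ GenuineExtOfQ (toQ F)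

/-- An absolutely irreducible `F ∈ ℤ[Y,X₁,…,Xₙ]` is a strongly `n`-genuine polynomial. -/
def IsStronglyGenuinePoly {n : ℕ} (F : Polynomial (MvPolynomial (Fin n) ℤ)) : Prop :=
  AbsIrred F ∧ StronglyGenuineExtOfQ (toQ F)

/-- The ring map `ℚ[X₁,…,Xₙ] → ℚ[X₁,…,Xₙ]` induced by the linear substitution
`Xᵢ ↦ Σⱼ σᵢⱼ Xⱼ`. -/
def lsubMv {n : ℕ} (σ : Matrix (Fin n) (Fin n) ℚ) :
    MvPolynomial (Fin n) ℚ →+* MvPolynomial (Fin n) ℚ :=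
  (MvPolynomial.aeval (R := ℚ)
    fun i => ∑ j, MvPolynomial.C (σ i j) * MvPolynomial.X j).toRingHom

/-- `F_σ(Y,X) := F(Y,σ(X))` for a linear change of variables `σ`. -/
def applyGL {n : ℕ} (σ : Matrix (Fin n) (Fin n) ℚ)
    (Fq : Polynomial (MvPolynomial (Fin n) ℚ)) : Polynomial (MvPolynomial (Fin n) ℚ) :=
  Fq.map (lsubMv σ)

/-- `F` is `(1,n)`-allowable: absolutely irreducible, monic in `Y`, and
`ℚ(X)[Y]/(F_σ)` is an `n`-genuine extension for every `σ ∈ GLₙ(ℚ)`. -/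
def IsAllowable {n : ℕ} (F : Polynomial (MvPolynomial (Fin n) ℤ)) : Prop :=
  AbsIrred F ∧ F.Monic ∧
    ∀ σ : Matrix (Fin n) (Fin n) ℚ, IsUnit σ.det → GenuineExtOfQ (applyGL σ (toQ F))

/-- `F` is strongly `(1,n)`-allowable: absolutely irreducible, monic in `Y`, and
`ℚ(X)[Y]/(F_σ)` is a strongly `n`-genuine extension for every `σ ∈ GLₙ(ℚ)`. -/
def IsStronglyAllowable {n : ℕ} (F : Polynomial (MvPolynomial (Fin n) ℤ)) : Prop :=
  AbsIrred F ∧ F.Monic ∧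
    ∀ σ : Matrix (Fin n) (Fin n) ℚ, IsUnit σ.det → StronglyGenuineExtOfQ (applyGL σ (toQ F))

/-- `F` has the form (1.2) with parameter `m`:
`F = Y^{md} + f₁(X) Y^{m(d-1)} + ⋯ + f_{d-1}(X) Y^m + f_d(X)` with `f_d ≠ 0`. -/
def HasForm (n m : ℕ) (F : Polynomial (MvPolynomial (Fin n) ℤ)) : Prop :=
  ∃ (d : ℕ) (f : ℕ → MvPolynomial (Fin n) ℤ), 1 ≤ d ∧ f d ≠ 0 ∧
    F = Polynomial.X ^ (m * d) +
      ∑ j ∈ Finset.Icc 1 d, Polynomial.C (f j) * Polynomial.X ^ (m * (d - j))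

/-- `P` has a linear factor in `Y`: `P = (Y − Q(X))·H̃(Y,X)`. -/
def HasLinearFactorY {n : ℕ} {R : Type*} [CommRing R]
    (P : Polynomial (MvPolynomial (Fin n) R)) : Prop :=
  ∃ (Q : MvPolynomial (Fin n) R) (H : Polynomial (MvPolynomial (Fin n) R)),
    P = (Polynomial.X - Polynomial.C Q) * H

/-- The canonical map `ℚ[X₁,…,Xₙ] → ℚ(X)[Y]/(F)`. -/
def structMap {n : ℕ} (F : Polynomial (MvPolynomial (Fin n) ℤ)) :
    MvPolynomial (Fin n) ℚ →+* AdjoinRoot (toFrac F) :=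
  (algebraMap (RF n) (AdjoinRoot (toFrac F))).comp
    (algebraMap (MvPolynomial (Fin n) ℚ) (RF n))

/-- `z ∈ ℚ(X)[Y]/(F)` lies in the subfield `ℚ((Xᵢ)_{i≠j})`: it can be written
as a quotient of two polynomials not involving `Xⱼ`. -/
def CoordMem {n : ℕ} (j : Fin n) (F : Polynomial (MvPolynomial (Fin n) ℤ))
    (z : AdjoinRoot (toFrac F)) : Prop :=
  ∃ a b : MvPolynomial (Fin n) ℚ,
    MvPolynomial.degreeOf j a = 0 ∧ MvPolynomial.degreeOf j b = 0 ∧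
    structMap F b ≠ 0 ∧ z * structMap F b = structMap F a

/-- `z ∈ ℚ(X)[Y]/(F)` is algebraic over the subfield `ℚ((Xᵢ)_{i≠j})`. -/
def AlgOverCoord {n : ℕ} (j : Fin n) (F : Polynomial (MvPolynomial (Fin n) ℤ))
    (z : AdjoinRoot (toFrac F)) : Prop :=
  ∃ P : Polynomial (AdjoinRoot (toFrac F)), P ≠ 0 ∧ (∀ k, CoordMem j F (P.coeff k)) ∧
    Polynomial.eval z P = 0

/-- Substitute `Xᵢ = xᵢ` for `i ∈ I` into `F`, over `ℚ̄`. -/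
def substSome {n : ℕ} (I : Finset (Fin n)) (x : Fin n → ℚ)
    (F : Polynomial (MvPolynomial (Fin n) ℤ)) :
    Polynomial (MvPolynomial (Fin n) (AlgebraicClosure ℚ)) :=
  (toQ F).map
    ((MvPolynomial.aeval (R := ℚ) fun i =>
      if i ∈ I then MvPolynomial.C (algebraMap ℚ (AlgebraicClosure ℚ) (x i))
      else MvPolynomial.X i).toRingHom)

/-- Substitute `Xᵢ = xᵢ` for all `i ≠ i₀` into `F`, over `ℚ̄`. -/
def substKeepFirst {n : ℕ} (i0 : Fin n) (x : {i : Fin n // i ≠ i0} → ℤ)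
    (F : Polynomial (MvPolynomial (Fin n) ℤ)) :
    Polynomial (MvPolynomial (Fin n) (AlgebraicClosure ℚ)) :=
  F.map
    ((MvPolynomial.aeval (R := ℤ) fun i =>
      if h : i = i0 then (MvPolynomial.X i : MvPolynomial (Fin n) (AlgebraicClosure ℚ))
      else MvPolynomial.C ((x ⟨i, h⟩ : ℤ) : AlgebraicClosure ℚ)).toRingHom)

/-- `‖L‖`: maximum absolute value of an entry of an integer matrix. -/
def matNorm {n : ℕ} (L : Matrix (Fin n) (Fin n) ℤ) : ℕ :=
  Finset.univ.sup fun p : Fin n × Fin n => (L p.1 p.2).natAbs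

/-- The standard additive character `e_p(a) = exp(2πi a/p)` on `ZMod p`. -/
def eZp (p : ℕ) (a : ZMod p) : ℂ :=
  Complex.exp (2 * Real.pi * Complex.I * (a.val : ℂ) / (p : ℂ))


/-- constants in the Laurent field -/
def iotaL (K : Type*) [Field K] : K →+* FractionRing (PowerSeries K) :=
  (algebraMap (PowerSeries K) (FractionRing (PowerSeries K))).comp PowerSeries.C

def tL (K : Type*) [Field K] : FractionRing (PowerSeries K) :=
  algebraMap (PowerSeries K) (FractionRing (PowerSeries K)) PowerSeries.X

lemma tL_ne (K : Type*) [Field K] : tL K ≠ 0 := by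
  unfold tL
  simp [PowerSeries.X_ne_zero]

lemma int_of_alg {K : Type*} [Field K] (P : K[X]) (hP : P ≠ 0)
    (z : FractionRing (PowerSeries K)) (hz : P.eval₂ (iotaL K) z = 0) :
    ∃ w : PowerSeries K, algebraMap _ _ w = z := by
  apply IsIntegrallyClosed.isIntegral_iff.mp
  refine ⟨(C (P.leadingCoeff⁻¹) * P).map PowerSeries.C, ?_, ?_⟩
  · apply Monic.map
    rw [mul_comm]
    exact monic_mul_leadingCoeff_inv hP
  · rw [eval₂_map]
    change eval₂ (iotaL K) z _ = 0
    rw [eval₂_mul, hz, mul_zero]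

lemma const_of_alg {K : Type*} [Field K] (P : K[X]) (hP : P ≠ 0)
    (z : FractionRing (PowerSeries K)) (hz : P.eval₂ (iotaL K) z = 0) :
    ∃ c : K, iotaL K c = z := by
  obtain ⟨w, rfl⟩ := int_of_alg P hP z hz
  set a := PowerSeries.constantCoeff w with ha
  refine ⟨a, ?_⟩
  by_contra hne
  set u := w - PowerSeries.C a with hu
  have hu0 : algebraMap (PowerSeries K) (FractionRing (PowerSeries K)) u ≠ 0 := by
    rw [hu, map_sub, sub_ne_zero]; exact fun h => hne h.symm
  have hQ : (P.comp (X + C a)).eval₂ (iotaL K) (algebraMap _ _ u) = 0 := by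
    rw [eval₂_comp]
    simp only [eval₂_add, eval₂_X, eval₂_C]
    rw [hu, map_sub]
    rw [show algebraMap (PowerSeries K) (FractionRing (PowerSeries K)) (PowerSeries.C a) = iotaL K a from rfl]
    rw [sub_add_cancel, hz]
  have hQ0 : P.comp (X + C a) ≠ 0 := by
    intro h
    rcases comp_eq_zero_iff.mp h with h | h
    · exact hP h
    · have := h.2
      have h3 := congrArg natDegree this
      simp at h3
  have hR : (P.comp (X + C a)).reverse.eval₂ (iotaL K) (algebraMap _ _ u)⁻¹ = 0 := by
    have : Invertible (algebraMap (PowerSeries K) (FractionRing (PowerSeries K)) u) :=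
      invertibleOfNonzero hu0
    have := eval₂_reverse_mul_pow (iotaL K) (algebraMap _ _ u) (P.comp (X + C a))
    rw [hQ, invOf_eq_inv] at this
    rcases mul_eq_zero.mp this with h | h
    · exact h
    · exact absurd h (pow_ne_zero _ hu0)
  obtain ⟨w', hw'⟩ := int_of_alg _ (by simpa using hQ0) _ hR
  have h1 : w' * u = 1 := by
    apply IsFractionRing.injective (PowerSeries K) (FractionRing (PowerSeries K))
    rw [map_mul, hw', map_one, inv_mul_cancel₀ hu0]
  have h2 := congrArg PowerSeries.constantCoeff h1
  simp [hu, ha] at h2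

lemma not_alg_t {K : Type*} [Field K] (P : K[X])
    (hz : P.eval₂ (iotaL K) (tL K)⁻¹ = 0) : P = 0 := by
  by_contra hP
  obtain ⟨c, hc⟩ := const_of_alg P hP _ hz
  have h1 : PowerSeries.C c * PowerSeries.X = 1 := by
    apply IsFractionRing.injective (PowerSeries K) (FractionRing (PowerSeries K))
    rw [map_mul, map_one]
    change iotaL K c * tL K = 1
    rw [hc, inv_mul_cancel₀ (tL_ne K)]
  have h2 := congrArg PowerSeries.constantCoeff h1
  simp at h2

lemma coe_eval {K : Type*} [Field K] (p : K[X]) :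
    algebraMap (PowerSeries K) (FractionRing (PowerSeries K)) (p : PowerSeries K) =
      p.eval₂ (iotaL K) (tL K) := by
  induction p using Polynomial.induction_on' with
  | add p q hp hq => simp [eval₂_add, hp, hq]
  | monomial n a =>
    rw [← C_mul_X_pow_eq_monomial]
    simp [iotaL, tL]

lemma root_exists {K : Type*} [Field K] (f : K[X][X]) (D N : ℕ) (hD : 2 ≤ D) (hN : 1 ≤ N)
    (hf : f.Monic) (hfD : f.natDegree = D) (hdeg : ∀ j, j < D → (f.coeff j).natDegree ≤ N)
    (hc : (f.coeff (D - 1)).coeff N ≠ 0) :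
    ∃ y : FractionRing (PowerSeries K),
      f.eval₂ (eval₂RingHom (iotaL K) (tL K)⁻¹) y = 0 := by
  classical
  set c := (f.coeff (D - 1)).coeff N with hcdef
  let p : ℕ → PowerSeries K := fun j => ((reflect N (f.coeff j) : K[X]) : PowerSeries K)
  have hp : ∀ j, j < D → algebraMap _ _ (p j) =
      (f.coeff j).eval₂ (iotaL K) (tL K)⁻¹ * tL K ^ N := by
    intro j hj
    have : Invertible (tL K)⁻¹ := invertibleOfNonzero (inv_ne_zero (tL_ne K))
    have h := eval₂_reflect_mul_pow (iotaL K) (tL K)⁻¹ N (f.coeff j) (hdeg j hj)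
    rw [invOf_eq_inv, inv_inv] at h
    rw [← h, coe_eval, mul_assoc, ← mul_pow, inv_mul_cancel₀ (tL_ne K), one_pow, mul_one]
  let s : (PowerSeries K)[X] := ∑ j ∈ Finset.range D,
      C (p j * PowerSeries.X ^ (N * (D - 1 - j))) * X ^ j
  let g : (PowerSeries K)[X] := X ^ D + s
  have hs : s.degree < D := by
    apply lt_of_le_of_lt (degree_sum_le _ _)
    rw [Finset.sup_lt_iff (WithBot.bot_lt_coe _)]
    intro j hj
    refine lt_of_le_of_lt (degree_C_mul_X_pow_le _ _) ?_
    exact_mod_cast Finset.mem_range.mp hj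
  have hg : g.Monic := monic_X_pow_add hs
  have hpc : PowerSeries.constantCoeff (p (D - 1)) = c := by
    simp only [p, ← PowerSeries.coeff_zero_eq_constantCoeff_apply, Polynomial.coeff_coe, coeff_reflect]
    simp [revAt_le, hcdef]
  have hred : g.map (PowerSeries.constantCoeff (R := K)) = X ^ D + C c * X ^ (D - 1) := by
    simp only [g, s, Polynomial.map_add, Polynomial.map_pow, map_X, Polynomial.map_sum,
      Polynomial.map_mul, map_C]
    congr 1
    rw [Finset.sum_eq_single (D - 1)]
    · simp [hpc]
    · intro j hj hne
      have : N * (D - 1 - j) ≠ 0 := by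
        have := Finset.mem_range.mp hj
        apply Nat.mul_ne_zero <;> omega
      simp [this]
    · intro h; exact absurd (Finset.mem_range.mpr (by omega)) h
  have hmem : ∀ w : PowerSeries K, w ∈ (Ideal.span {PowerSeries.X} : Ideal (PowerSeries K)) ↔
      PowerSeries.constantCoeff w = 0 := by
    intro w
    rw [Ideal.mem_span_singleton, PowerSeries.X_dvd_iff]
  obtain ⟨e, rfl⟩ : ∃ e, D = e + 2 := ⟨D - 2, by omega⟩
  obtain ⟨z, hz, -⟩ := HenselianRing.is_henselian (I := (Ideal.span {PowerSeries.X} : Ideal (PowerSeries K)))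
    g hg (PowerSeries.C (-c)) (by
      rw [hmem]
      have := eval_map_apply (p := g) (f := PowerSeries.constantCoeff (R := K)) (x := PowerSeries.C (-c))
      rw [← this, hred]
      simp
      ring) (by
      apply IsUnit.map
      rw [PowerSeries.isUnit_iff_constantCoeff]
      have := eval_map_apply (p := derivative g) (f := PowerSeries.constantCoeff (R := K)) (x := PowerSeries.C (-c))
      rw [← this, ← derivative_map, hred, isUnit_iff_ne_zero]
      have h2 : eval (PowerSeries.constantCoeff (PowerSeries.C (-c)))
        (derivative (X ^ (e + 2) + C c * X ^ (e + 2 - 1))) = (-c) ^ (e + 1) := by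
        simp
        ring
      rw [h2]
      exact pow_ne_zero _ (neg_ne_zero.mpr hc))
  refine ⟨algebraMap _ _ z * (tL K)⁻¹ ^ N, ?_⟩
  have h1 : eval₂ (algebraMap (PowerSeries K) (FractionRing (PowerSeries K))) (algebraMap _ _ z) g = 0 := by
    rw [eval₂_at_apply, hz, map_zero]
  set D := e + 2 with hDe
  set Z := algebraMap (PowerSeries K) (FractionRing (PowerSeries K)) z
  have ht := tL_ne K
  have h2 : f.eval₂ (eval₂RingHom (iotaL K) (tL K)⁻¹) (Z * (tL K)⁻¹ ^ N) * (tL K) ^ (N * D) =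
      eval₂ (algebraMap (PowerSeries K) (FractionRing (PowerSeries K))) Z g := by
    rw [eval₂_eq_sum_range, hfD, Finset.sum_range_succ, ← hfD, hf.coeff_natDegree, hfD, map_one, one_mul]
    simp only [g, s, eval₂_add, eval₂_pow, eval₂_X, eval₂_finsetSum, eval₂_mul, eval₂_C]
    rw [add_mul, add_comm]
    congr 1
    · rw [mul_pow, ← pow_mul, mul_assoc, ← mul_pow, inv_mul_cancel₀ ht, one_pow, mul_one]
    · rw [Finset.sum_mul]
      apply Finset.sum_congr rfl
      intro j hj
      have hj := Finset.mem_range.mp hj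
      rw [map_mul, hp j hj, map_pow]
      change _ = _ * tL K ^ _ * _
      rw [coe_eval₂RingHom]
      have : N * D = N * j + N + N * (D - 1 - j) := by
        rw [← Nat.mul_succ, ← Nat.mul_add]; congr 1; omega
      rw [this, pow_add, pow_add, mul_pow, ← pow_mul, inv_pow]
      field_simp
      rfl
  rw [h1] at h2
  rcases mul_eq_zero.mp h2 with h | h
  · exact h
  · exact absurd h (pow_ne_zero _ ht)

lemma degreeOf_coeff_le {n : ℕ} {R : Type*} [CommSemiring R]
    {F : Polynomial (MvPolynomial (Fin n) R)} {i : Fin n} {b : ℕ} (h : degX F i ≤ b) (j : ℕ) :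
    (F.coeff j).degreeOf i ≤ b := by
  by_cases hj : j ∈ F.support
  · exact (Finset.le_sup (f := fun k => (F.coeff k).degreeOf i) hj).trans h
  · rw [notMem_support_iff.mp hj]; simp

lemma degX_le {n : ℕ} {R : Type*} [CommSemiring R]
    {F : Polynomial (MvPolynomial (Fin n) R)} {i : Fin n} {b : ℕ}
    (h : ∀ j, (F.coeff j).degreeOf i ≤ b) : degX F i ≤ b :=
  Finset.sup_le fun j _ => h j

/-- `X ↦ X + vT`. -/
def shiftHom {n : ℕ} (v : Fin n → ℚ) :
    MvPolynomial (Fin n) ℚ →+* (MvPolynomial (Fin n) ℚ)[X] :=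
  MvPolynomial.eval₂Hom (C.comp MvPolynomial.C)
    (fun i => C (MvPolynomial.X i) + C (MvPolynomial.C (v i)) * X)

lemma prod_top {R ι : Type*} [CommSemiring R] (s : Finset ι) (q : ι → R[X]) (d e : ι → ℕ) (a : ι → R)
    (hd : ∀ i, (q i).natDegree ≤ d i) (ha : ∀ i, (q i).coeff (d i) = a i) :
    (∏ i ∈ s, q i ^ e i).natDegree ≤ ∑ i ∈ s, e i * d i ∧
    (∏ i ∈ s, q i ^ e i).coeff (∑ i ∈ s, e i * d i) = ∏ i ∈ s, a i ^ e i := by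
  classical
  induction s using Finset.induction_on with
  | empty => simp
  | insert i s his ih =>
    rw [Finset.prod_insert his, Finset.sum_insert his, Finset.prod_insert his]
    have h1 : (q i ^ e i).natDegree ≤ e i * d i := natDegree_pow_le_of_le _ (hd i)
    refine ⟨natDegree_mul_le_of_le h1 ih.1, ?_⟩
    rw [coeff_mul_add_eq_of_natDegree_le h1 ih.1, ih.2, coeff_pow_of_natDegree_le (hd i), ha]

lemma shift_monomial_top {n : ℕ} (v : Fin n → ℚ) (e : Fin n →₀ ℕ) (c : ℚ) :
    (shiftHom v (MvPolynomial.monomial e c)).natDegree ≤ ∑ i, e i * (if v i = 0 then 0 else 1) ∧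
    (shiftHom v (MvPolynomial.monomial e c)).coeff (∑ i, e i * (if v i = 0 then 0 else 1)) =
      MvPolynomial.C c * ∏ i, (if v i = 0 then MvPolynomial.X i else MvPolynomial.C (v i)) ^ e i := by
  have h := prod_top (R := MvPolynomial (Fin n) ℚ) Finset.univ
    (fun i => C (MvPolynomial.X i) + C (MvPolynomial.C (v i)) * X)
    (fun i => if v i = 0 then 0 else 1) e
    (fun i => if v i = 0 then MvPolynomial.X i else MvPolynomial.C (v i))
    (by
      intro i
      by_cases hv : v i = 0
      · simp [hv]
      · simp only [hv, if_false]
        compute_degree)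
    (by
      intro i
      by_cases hv : v i = 0
      · simp [hv]
      · simp [hv, coeff_C])
  have h2 : shiftHom v (MvPolynomial.monomial e c) = C (MvPolynomial.C c) *
      ∏ i, (C (MvPolynomial.X i) + C (MvPolynomial.C (v i)) * X) ^ e i := by
    simp only [shiftHom, MvPolynomial.coe_eval₂Hom, MvPolynomial.eval₂_monomial, RingHom.comp_apply]
    rw [Finsupp.prod_fintype]
    intro i; simp
  rw [h2]
  refine ⟨(natDegree_C_mul_le _ _).trans h.1, ?_⟩
  rw [coeff_C_mul, h.2]

lemma shift_top {n : ℕ} (v : Fin n → ℚ) (k : Fin n → ℕ) (p : MvPolynomial (Fin n) ℚ)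
    (hp : ∀ i, p.degreeOf i ≤ k i) :
    (shiftHom v p).natDegree ≤ ∑ i, k i * (if v i = 0 then 0 else 1) ∧
    (p.coeff (Finsupp.equivFunOnFinite.symm k) ≠ 0 →
      (shiftHom v p).coeff (∑ i, k i * (if v i = 0 then 0 else 1)) ≠ 0) := by
  classical
  have hle : ∀ e ∈ p.support, ∀ i, e i ≤ k i := fun e he i =>
    (MvPolynomial.degreeOf_le_iff.mp (hp i)) e he
  have hsum : shiftHom v p = ∑ e ∈ p.support, shiftHom v (MvPolynomial.monomial e (p.coeff e)) := by
    conv_lhs => rw [p.as_sum]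
    rw [map_sum]
  constructor
  · rw [hsum]
    apply natDegree_sum_le_of_forall_le
    intro e he
    refine (shift_monomial_top v e _).1.trans (Finset.sum_le_sum fun i _ => ?_)
    exact Nat.mul_le_mul_right _ (hle e he i)
  · intro hk hzero
    set kk := Finsupp.equivFunOnFinite.symm k with hkk
    have hkki : ∀ i, kk i = k i := fun i => rfl
    have hkmem : kk ∈ p.support := MvPolynomial.mem_support_iff.mpr hk
    let r : (Fin n →₀ ℕ) → (Fin n →₀ ℕ) := fun e =>
      Finsupp.equivFunOnFinite.symm (fun i => if v i = 0 then e i else 0)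
    have hmon : ∀ e : Fin n →₀ ℕ,
        (∏ i, (if v i = 0 then MvPolynomial.X i else MvPolynomial.C (v i)) ^ e i :
          MvPolynomial (Fin n) ℚ) =
        MvPolynomial.monomial (r e) (∏ i, (if v i = 0 then 1 else v i) ^ e i) := by
      intro e
      rw [MvPolynomial.monomial_eq, Finsupp.prod_fintype _ _ (by simp), map_prod,
        ← Finset.prod_mul_distrib]
      apply Finset.prod_congr rfl
      intro i _
      by_cases hv : v i = 0 <;> simp [hv, r]
    have h0 := congrArg (MvPolynomial.coeff (r kk)) hzero
    rw [hsum, finsetSum_coeff, MvPolynomial.coeff_sum, Finset.sum_eq_single kk] at h0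
    · have h1 := (shift_monomial_top v kk (p.coeff kk)).2
      simp only [hkki] at h1
      rw [h1] at h0
      have h2 := hmon kk
      simp only [hkki] at h2
      rw [h2, MvPolynomial.coeff_C_mul, MvPolynomial.coeff_monomial, if_pos rfl,
        MvPolynomial.coeff_zero] at h0
      rcases mul_eq_zero.mp h0 with h | h
      · exact hk h
      · rw [Finset.prod_eq_zero_iff] at h
        obtain ⟨i, _, hi⟩ := h
        have := eq_zero_of_pow_eq_zero hi
        by_cases hv : v i = 0 <;> simp [hv] at this
    · intro e he hne
      have hlei : ∀ i ∈ Finset.univ, e i * (if v i = 0 then 0 else 1) ≤ k i * (if v i = 0 then 0 else 1) :=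
        fun i _ => Nat.mul_le_mul_right _ (hle e he i)
      by_cases hs : ∑ i, e i * (if v i = 0 then 0 else 1) = ∑ i, k i * (if v i = 0 then 0 else 1)
      · have h1 := (shift_monomial_top v e (p.coeff e)).2
        rw [← hs, h1, hmon, MvPolynomial.coeff_C_mul, MvPolynomial.coeff_monomial, if_neg, mul_zero]
        intro hr
        apply hne
        have h3 := (Finset.sum_eq_sum_iff_of_le hlei).mp hs
        ext i
        rw [hkki]
        by_cases hv : v i = 0
        · have := DFunLike.congr_fun hr i
          simpa [r, hv, hkki] using this
        · simpa [hv] using h3 i (Finset.mem_univ _)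
      · have hlt := lt_of_le_of_ne (Finset.sum_le_sum hlei) hs
        rw [coeff_eq_zero_of_natDegree_lt (lt_of_le_of_lt (shift_monomial_top v e _).1 hlt)]
        simp
    · intro h; exact absurd hkmem h

lemma lsubMv_X {n : ℕ} (σ : Matrix (Fin n) (Fin n) ℚ) (i : Fin n) :
    lsubMv σ (MvPolynomial.X i) = ∑ j, MvPolynomial.C (σ i j) * MvPolynomial.X j := by
  simp [lsubMv]

lemma lsubMv_C {n : ℕ} (σ : Matrix (Fin n) (Fin n) ℚ) (c : ℚ) :
    lsubMv σ (MvPolynomial.C c) = MvPolynomial.C c := by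
  simp [lsubMv]

lemma lsubMv_injective {n : ℕ} (σ : Matrix (Fin n) (Fin n) ℚ) (hσ : IsUnit σ.det) :
    Function.Injective (lsubMv σ) := by
  have h : (lsubMv σ⁻¹).comp (lsubMv σ) = RingHom.id _ := by
    apply MvPolynomial.ringHom_ext
    · intro c; simp [lsubMv_C]
    · intro i
      simp only [RingHom.comp_apply, lsubMv_X, map_sum, map_mul, lsubMv_C, RingHom.id_apply,
        Finset.mul_sum]
      rw [Finset.sum_comm]
      have h1 := Matrix.mul_nonsing_inv σ hσ
      have h2 : ∀ j, ∑ l, MvPolynomial.C (σ i l) * (MvPolynomial.C (σ⁻¹ l j) * MvPolynomial.X j) =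
          (MvPolynomial.C ((1 : Matrix (Fin n) (Fin n) ℚ) i j) * MvPolynomial.X j :
            MvPolynomial (Fin n) ℚ) := by
        intro j
        rw [← h1, Matrix.mul_apply, map_sum, Finset.sum_mul]
        apply Finset.sum_congr rfl
        intro l _
        rw [map_mul, mul_assoc]
      simp only [h2]
      rw [Finset.sum_eq_single i]
      · simp
      · intro j _ hj; simp [Matrix.one_apply_ne hj.symm]
      · simp
  intro a b hab
  have := congrArg (lsubMv σ⁻¹) hab
  simpa [← RingHom.comp_apply, h] using this

lemma shift_lsub {n : ℕ} (σ : Matrix (Fin n) (Fin n) ℚ) (i0 : Fin n) (p : MvPolynomial (Fin n) ℚ) :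
    shiftHom (Pi.single i0 1) (lsubMv σ p) = (shiftHom (fun i => σ i i0) p).map (lsubMv σ) := by
  have h : (shiftHom (Pi.single i0 1)).comp (lsubMv σ) =
      (mapRingHom (lsubMv σ)).comp (shiftHom (fun i => σ i i0)) := by
    apply MvPolynomial.ringHom_ext
    · intro c; simp [lsubMv_C, shiftHom]
    · intro i
      simp only [RingHom.comp_apply, lsubMv_X, map_sum, map_mul]
      simp only [shiftHom, MvPolynomial.coe_eval₂Hom, MvPolynomial.eval₂_C, MvPolynomial.eval₂_X,
        RingHom.comp_apply, coe_mapRingHom, Polynomial.map_add, Polynomial.map_mul, map_C, map_X,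
        lsubMv_C, lsubMv_X, mul_add, Finset.sum_add_distrib, map_sum, map_mul]
      congr 1
      rw [Finset.sum_eq_single i0]
      · simp
      · intro j _ hj; simp [Pi.single_eq_of_ne hj]
      · simp
  exact RingHom.congr_fun h p

/-- the embedding of `ℚ[X]` into Laurent series over `ℚ(X)`. -/
def phi {n : ℕ} (i0 : Fin n) : MvPolynomial (Fin n) ℚ →+* FractionRing (PowerSeries (RF n)) :=
  (eval₂RingHom (iotaL (RF n)) (tL (RF n))⁻¹).comp
    ((mapRingHom (algebraMap (MvPolynomial (Fin n) ℚ) (RF n))).comp (shiftHom (Pi.single i0 1)))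

lemma shift_injective {n : ℕ} (v : Fin n → ℚ) : Function.Injective (shiftHom v) := by
  have h : (evalRingHom 0).comp (shiftHom v) = RingHom.id _ := by
    apply MvPolynomial.ringHom_ext
    · intro c; simp [shiftHom]
    · intro i; simp [shiftHom]
  intro a b hab
  have := congrArg (evalRingHom 0) hab
  rw [← RingHom.comp_apply, ← RingHom.comp_apply, h] at this
  exact this

lemma phi_injective {n : ℕ} (i0 : Fin n) : Function.Injective (phi i0) := by
  rw [injective_iff_map_eq_zero]
  intro a ha
  have h1 := not_alg_t _ ha
  rw [RingHom.comp_apply, coe_mapRingHom,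
    Polynomial.map_eq_zero_iff (IsFractionRing.injective _ _)] at h1
  exact (injective_iff_map_eq_zero _).mp (shift_injective _) a h1

lemma phi_of_degreeOf {n : ℕ} (i0 : Fin n) (p : MvPolynomial (Fin n) ℚ) (hp : p.degreeOf i0 = 0) :
    phi i0 p = iotaL (RF n) (algebraMap _ _ p) := by
  have h : shiftHom (Pi.single i0 1) p = C p := by
    conv_rhs => rw [← MvPolynomial.eval₂_eta p]
    have h2 : (C (MvPolynomial.eval₂ MvPolynomial.C MvPolynomial.X p) : (MvPolynomial (Fin n) ℚ)[X]) =
       MvPolynomial.eval₂ (C.comp MvPolynomial.C) (fun i => C (MvPolynomial.X i)) p := by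
      exact MvPolynomial.eval₂_comp_left _ _ _ _
    rw [h2, shiftHom, MvPolynomial.coe_eval₂Hom]
    apply MvPolynomial.eval₂_congr
    intro i c hi hc
    have : i ≠ i0 := by
      rintro rfl
      have := (MvPolynomial.degreeOf_le_iff.mp hp.le) c (MvPolynomial.mem_support_iff.mpr hc)
      exact Finsupp.mem_support_iff.mp hi (by omega)
    simp [Pi.single_eq_of_ne this]
  simp [phi, h]

lemma strongly_genuine {n D : ℕ} (hD : 2 ≤ D) (k : Fin n → ℕ) (hk : ∀ i, 1 ≤ k i)
    (F : Polynomial (MvPolynomial (Fin n) ℤ)) (hF : F.Monic) (hFD : F.natDegree = D)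
    (hdeg : ∀ i, degX F i ≤ k i)
    (hc : (F.coeff (D - 1)).coeff (Finsupp.equivFunOnFinite.symm k) ≠ 0)
    (σ : Matrix (Fin n) (Fin n) ℚ) (hσ : IsUnit σ.det) :
    StronglyGenuineExtOfQ (applyGL σ (toQ F)) := by
  intro M _ _ ⟨eM⟩ M' hM' G hG ⟨eG⟩
  have hpos : 0 < (toFrac G).natDegree := hG.natDegree_pos
  refine ⟨hpos.trans_le ?_, ?_⟩
  · exact natDegree_map_le.trans natDegree_map_le
  intro i0
  by_contra hi0
  have hi0 : degX G i0 = 0 := by omega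
  apply hM'
  set v : Fin n → ℚ := fun i => σ i i0 with hv
  have hvne : ∃ i, v i ≠ 0 := by
    by_contra! h
    exact hσ.ne_zero (Matrix.det_eq_zero_of_column_eq_zero i0 h)
  set N := ∑ i, k i * (if v i = 0 then 0 else 1) with hN
  have hN1 : 1 ≤ N := by
    obtain ⟨i, hi⟩ := hvne
    refine le_trans ?_ (Finset.single_le_sum (f := fun i => k i * (if v i = 0 then 0 else 1))
      (fun _ _ => Nat.zero_le _) (Finset.mem_univ i))
    simpa [hi] using hk i
  have hcoef : ∀ j i, ((toQ F).coeff j).degreeOf i ≤ k i := by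
    intro j i
    rw [toQ, coeff_map]
    exact (MvPolynomial.degreeOf_le_iff.mpr fun m hm =>
      MvPolynomial.degreeOf_le_iff.mp (degreeOf_coeff_le (hdeg i) j) m
        (MvPolynomial.support_map_subset _ _ hm))
  let ψ : MvPolynomial (Fin n) ℚ →+* (RF n)[X] :=
    (mapRingHom (algebraMap (MvPolynomial (Fin n) ℚ) (RF n))).comp (shiftHom (Pi.single i0 1))
  have hψ : ∀ p, ψ (lsubMv σ p) =
      ((shiftHom v p).map (lsubMv σ)).map (algebraMap (MvPolynomial (Fin n) ℚ) (RF n)) := by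
    intro p
    simp only [ψ, RingHom.comp_apply, shift_lsub, coe_mapRingHom, hv]
  have hmon : (toQ F).Monic := hF.map _
  have hmonσ : (applyGL σ (toQ F)).Monic := hmon.map _
  obtain ⟨y, hy⟩ := root_exists ((applyGL σ (toQ F)).map ψ) D N hD hN1 (hmonσ.map _)
    (by rw [hmonσ.natDegree_map, applyGL, hmon.natDegree_map, toQ, hF.natDegree_map, hFD])
    (by
      intro j _
      rw [coeff_map, applyGL, coeff_map, hψ]
      exact natDegree_map_le.trans (natDegree_map_le.trans (shift_top v k _ (hcoef j)).1))
    (by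
      rw [coeff_map, applyGL, coeff_map, hψ, coeff_map, coeff_map]
      rw [map_ne_zero_iff _ (IsFractionRing.injective _ _), map_ne_zero_iff _ (lsubMv_injective σ hσ)]
      apply (shift_top v k _ (hcoef _)).2
      rw [toQ, coeff_map, MvPolynomial.coeff_map]
      simpa using hc)
  rw [eval₂_map] at hy
  change eval₂ (phi i0) y _ = 0 at hy
  let Φ : RF n →+* FractionRing (PowerSeries (RF n)) := IsFractionRing.lift (phi_injective i0)
  have hΦ : Φ.comp (algebraMap (MvPolynomial (Fin n) ℚ) (RF n)) = phi i0 := by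
    apply RingHom.ext
    intro x
    simp [Φ]
  let Ψ : AdjoinRoot (toFracQ (applyGL σ (toQ F))) →+* FractionRing (PowerSeries (RF n)) :=
    AdjoinRoot.lift Φ y (by rw [toFracQ, eval₂_map, hΦ, hy])
  let Θ : AdjoinRoot (toFrac G) →+* FractionRing (PowerSeries (RF n)) :=
    Ψ.comp ((eM.symm : M →+* _).comp ((algebraMap M' M).comp (eG : _ →+* M')))
  have hΘ : Θ.comp (algebraMap (RF n) (AdjoinRoot (toFrac G))) = Φ := by
    apply RingHom.ext
    intro x
    simp only [Θ, RingHom.comp_apply]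
    have h1 : (eG : AdjoinRoot (toFrac G) →+* M') (algebraMap (RF n) _ x) = algebraMap (RF n) M' x :=
      eG.commutes x
    rw [h1]
    have h2 : algebraMap M' M (algebraMap (RF n) M' x) = algebraMap (RF n) M x := rfl
    rw [h2]
    have h3 : (eM.symm : M →+* AdjoinRoot (toFracQ (applyGL σ (toQ F)))) (algebraMap (RF n) M x) =
        algebraMap (RF n) (AdjoinRoot (toFracQ (applyGL σ (toQ F)))) x :=
      eM.symm.commutes x
    rw [h3]
    exact AdjoinRoot.lift_of _
  obtain ⟨z, hroot⟩ : ∃ z, eval₂ Φ z (toFrac G) = 0 := by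
    refine ⟨Θ (AdjoinRoot.root _), ?_⟩
    rw [← hΘ, ← Polynomial.hom_eval₂]
    have := AdjoinRoot.eval₂_root (toFrac G)
    rw [← AdjoinRoot.algebraMap_eq] at this
    rw [this, map_zero]
  have hroot2 : eval₂ (iotaL (RF n)) z (toFrac G) = 0 := by
    rw [← hroot]
    conv_rhs => rw [toFrac, toFracQ, eval₂_map, hΦ]
    rw [toFrac, toFracQ, eval₂_map]
    rw [eval₂_eq_sum_range, eval₂_eq_sum_range]
    apply Finset.sum_congr rfl
    intro j _
    rw [phi_of_degreeOf]
    · rfl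
    · apply Nat.eq_zero_of_le_zero
      rw [toQ, coeff_map]
      exact (MvPolynomial.degreeOf_le_iff.mpr fun m hm =>
        MvPolynomial.degreeOf_le_iff.mp (degreeOf_coeff_le hi0.le j) m
          (MvPolynomial.support_map_subset _ _ hm))
  obtain ⟨b, hb⟩ := const_of_alg _ hG.ne_zero _ hroot2
  rw [← hb, eval₂_at_apply, map_eq_zero] at hroot2
  have hdeg1 := degree_eq_one_of_irreducible_of_root hG hroot2
  rw [← IntermediateField.finrank_eq_one_iff, ← eG.toLinearEquiv.finrank_eq]
  rw [(AdjoinRoot.powerBasis hG.ne_zero).finrank, AdjoinRoot.powerBasis_dim]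
  exact natDegree_eq_of_degree_eq_some hdeg1

lemma swap_coeff {R : Type*} [CommSemiring R] (f : R[X][X]) (e j : ℕ) :
    ((Bivariate.swap f).coeff e).coeff j = (f.coeff j).coeff e := by
  induction f using Polynomial.induction_on' with
  | add p q hp hq => simp [hp, hq]
  | monomial a p =>
    induction p using Polynomial.induction_on' with
    | add p q hp hq => simp only [map_add, coeff_add, hp, hq]
    | monomial b r =>
      rw [Bivariate.swap_monomial_monomial]
      simp only [coeff_monomial]
      by_cases h1 : b = e <;> by_cases h2 : a = j <;> simp [h1, h2, coeff_monomial]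

lemma swap_lead_lt {K : Type*} [Field K] (g : K[X][X]) (hg : g.Monic)
    (a : ℕ) (ha : 0 < a) (hd : 0 < g.natDegree) :
    ((Bivariate.swap g).coeff a).natDegree < g.natDegree := by
  suffices h : ((Bivariate.swap g).coeff a).natDegree ≤ g.natDegree - 1 by omega
  rw [natDegree_le_iff_coeff_eq_zero]
  intro m hm
  replace hm : g.natDegree ≤ m := by omega
  rw [swap_coeff]
  rcases hm.eq_or_lt with h | h
  · rw [← h, hg.coeff_natDegree, coeff_one, if_neg (by omega)]
  · rw [coeff_eq_zero_of_natDegree_lt h, coeff_zero]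

lemma common_root {K : Type*} [Field K] [IsAlgClosed K] (g h : K[X][X]) (hh : h.Monic)
    (hd : 0 < h.natDegree) (hb : (Bivariate.swap h).natDegree = 0) :
    ∃ r : K, ∀ e, ((Bivariate.swap (g * h)).coeff e).eval r = 0 := by
  have hC := eq_C_of_natDegree_eq_zero hb
  set h0 := (Bivariate.swap h).coeff 0 with hh0
  have hdeg : h0.natDegree ≠ 0 := by
    have : h0.coeff h.natDegree = 1 := by
      rw [hh0, swap_coeff, hh.coeff_natDegree, coeff_one_zero]
    have := le_natDegree_of_ne_zero (p := h0) (n := h.natDegree) (by rw [this]; exact one_ne_zero)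
    omega
  obtain ⟨r, hr⟩ := IsAlgClosed.exists_root h0 (by
    intro hh; exact hdeg (natDegree_eq_of_degree_eq_some hh))
  refine ⟨r, fun e => ?_⟩
  rw [map_mul, hC, coeff_mul_C, eval_mul, hr, mul_zero]

lemma irr_biv {K : Type*} [Field K] [IsAlgClosed K] (f : K[X][X]) (D N : ℕ) (hD : 2 ≤ D)
    (hf : f.Monic) (hfD : f.natDegree = D)
    (hdeg : ∀ j, (f.coeff j).natDegree ≤ N) (hc : (f.coeff (D - 1)).coeff N ≠ 0)
    (hr : ∀ r : K, ¬ (((Bivariate.swap f).coeff 0).eval r = 0 ∧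
      ((Bivariate.swap f).coeff N).eval r = 0)) : Irreducible f := by
  have hf1 : f ≠ 1 := by rintro rfl; simp at hfD; omega
  rw [hf.irreducible_iff_natDegree]
  refine ⟨hf1, ?_⟩
  intro g h hg hh hgh
  by_contra! hcon
  obtain ⟨hgd, hhd⟩ := hcon
  have hdd : g.natDegree + h.natDegree = D := by rw [← hfD, ← hgh, hg.natDegree_mul hh]
  have hlead : (((Bivariate.swap f).coeff N).coeff (D - 1)) ≠ 0 := by rwa [swap_coeff]
  have hfN : (Bivariate.swap f).natDegree = N := by
    apply natDegree_eq_of_le_of_coeff_ne_zero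
    · rw [natDegree_le_iff_coeff_eq_zero]
      intro e he
      ext j
      rw [swap_coeff, coeff_eq_zero_of_natDegree_lt (lt_of_le_of_lt (hdeg j) he), coeff_zero]
    · intro h0; rw [h0] at hlead; simp at hlead
  have hs : Bivariate.swap f = Bivariate.swap g * Bivariate.swap h := by rw [← hgh, map_mul]
  by_cases hb : (Bivariate.swap h).natDegree = 0
  · obtain ⟨r, hrr⟩ := common_root g h hh (by omega) hb
    rw [hgh] at hrr
    exact hr r ⟨hrr 0, hrr N⟩
  by_cases ha : (Bivariate.swap g).natDegree = 0
  · obtain ⟨r, hrr⟩ := common_root h g hg (by omega) ha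
    rw [mul_comm, hgh] at hrr
    exact hr r ⟨hrr 0, hrr N⟩
  have hl : (Bivariate.swap f).coeff N =
      (Bivariate.swap g).coeff (Bivariate.swap g).natDegree *
      (Bivariate.swap h).coeff (Bivariate.swap h).natDegree := by
    rw [← hfN]
    change leadingCoeff _ = leadingCoeff _ * leadingCoeff _
    rw [hs, leadingCoeff_mul]
  have h1 := swap_lead_lt g hg _ (by omega : 0 < (Bivariate.swap g).natDegree) (by omega)
  have h2 := swap_lead_lt h hh _ (by omega : 0 < (Bivariate.swap h).natDegree) (by omega)
  have h3 := le_natDegree_of_ne_zero hlead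
  rw [hl] at h3
  have h4 := natDegree_mul_le (p := (Bivariate.swap g).coeff (Bivariate.swap g).natDegree)
    (q := (Bivariate.swap h).coeff (Bivariate.swap h).natDegree)
  omega

/-- coefficient of `Y^j X^m`. -/
def cf {n : ℕ} (F : Polynomial (MvPolynomial (Fin n) ℤ)) (j : ℕ) (m : Fin n →₀ ℕ) : ℤ :=
  (F.coeff j).coeff m

/-- the coefficient of `X_{i0}^e` (other variables set to zero), as a polynomial in `Y`. -/
def rowP {n : ℕ} (D : ℕ) (i0 : Fin n) (F : Polynomial (MvPolynomial (Fin n) ℤ)) (e : ℕ) :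
    (AlgebraicClosure ℚ)[X] :=
  ∑ j ∈ Finset.range (D + 1), C ((cf F j (Finsupp.single i0 e) : ℤ) : AlgebraicClosure ℚ) * X ^ j

/-- `X_{i0} ↦ t`, the other variables to zero. -/
def lineHom {n : ℕ} (i0 : Fin n) :
    MvPolynomial (Fin n) (AlgebraicClosure ℚ) →+* (AlgebraicClosure ℚ)[X] :=
  MvPolynomial.eval₂Hom C (fun i => if i = i0 then X else 0)

lemma lineHom_coeff {n : ℕ} (i0 : Fin n) (p : MvPolynomial (Fin n) (AlgebraicClosure ℚ)) (e : ℕ) :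
    (lineHom i0 p).coeff e = p.coeff (Finsupp.single i0 e) := by
  classical
  induction p using MvPolynomial.induction_on' with
  | add p q hp hq => simp [hp, hq]
  | monomial m c =>
    have h : lineHom i0 (MvPolynomial.monomial m c) =
        C c * ∏ i, (if i = i0 then X else 0 : (AlgebraicClosure ℚ)[X]) ^ m i := by
      simp only [lineHom, MvPolynomial.coe_eval₂Hom, MvPolynomial.eval₂_monomial]
      rw [Finsupp.prod_fintype]
      intro i; simp
    rw [h, MvPolynomial.coeff_monomial, coeff_C_mul]
    by_cases hm : ∃ i, i ≠ i0 ∧ m i ≠ 0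
    · obtain ⟨i, hi, hmi⟩ := hm
      rw [Finset.prod_eq_zero (Finset.mem_univ i) (by simp [hi, hmi]), if_neg]
      · simp
      · rintro rfl
        exact hmi (by simp [hi.symm])
    · push Not at hm
      rw [Finset.prod_eq_single i0 (fun i _ hi => by simp [hm i hi]) (by simp)]
      have : m = Finsupp.single i0 (m i0) := by
        ext i
        by_cases hi : i = i0
        · subst hi; simp
        · rw [hm i hi, Finsupp.single_eq_of_ne hi]
      rw [if_pos rfl, coeff_X_pow]
      by_cases he : e = m i0
      · rw [if_pos he, he, ← this, if_pos rfl, mul_one]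
      · rw [if_neg he, if_neg, mul_zero]
        intro h2
        apply he
        rw [h2]; simp

lemma absIrred_of {n D : ℕ} (hD : 2 ≤ D) (k : Fin n → ℕ)
    (F : Polynomial (MvPolynomial (Fin n) ℤ)) (hF : F.Monic) (hFD : F.natDegree = D)
    (hdeg : ∀ i, degX F i ≤ k i) (i0 : Fin n)
    (hc : cf F (D - 1) (Finsupp.single i0 (k i0)) ≠ 0)
    (hr : ∀ r, ¬ ((rowP D i0 F 0).eval r = 0 ∧ (rowP D i0 F (k i0)).eval r = 0)) :
    AbsIrred F := by
  set P := F.map (MvPolynomial.map (Int.castRingHom (AlgebraicClosure ℚ))) with hP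
  have hPm : P.Monic := hF.map _
  have hPD : P.natDegree = D := by rw [hP, hF.natDegree_map, hFD]
  have hco : ∀ j e, ((P.map (lineHom i0)).coeff j).coeff e =
      ((cf F j (Finsupp.single i0 e) : ℤ) : AlgebraicClosure ℚ) := by
    intro j e
    rw [coeff_map, lineHom_coeff, hP, coeff_map, MvPolynomial.coeff_map]
    rfl
  have hrow : ∀ e, (Bivariate.swap (P.map (lineHom i0))).coeff e = rowP D i0 F e := by
    intro e
    ext j
    rw [swap_coeff, hco, rowP, finsetSum_coeff]
    simp only [coeff_C_mul, coeff_X_pow, mul_ite, mul_one, mul_zero, Finset.sum_ite_eq]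
    split_ifs with h
    · rfl
    · rw [cf, coeff_eq_zero_of_natDegree_lt]
      · simp
      · rw [Finset.mem_range] at h; omega
  refine Monic.irreducible_of_irreducible_map (lineHom i0) P hPm ?_
  apply irr_biv _ D (k i0) hD (hPm.map _)
  · rw [hPm.natDegree_map, hPD]
  · intro j
    rw [natDegree_le_iff_coeff_eq_zero]
    intro e he
    rw [hco, cf]
    by_contra hne
    have hne : (F.coeff j).coeff (Finsupp.single i0 e) ≠ 0 := by
      intro h; apply hne; rw [h]; simp
    have := MvPolynomial.degreeOf_le_iff.mp (degreeOf_coeff_le (hdeg i0) j) _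
      (MvPolynomial.mem_support_iff.mpr hne)
    simp at this
    omega
  · rw [hco]
    exact_mod_cast hc
  · intro r
    rw [hrow, hrow]
    exact hr r

/-- the box of polynomials -/
def boxS (n D : ℕ) (k : Fin n → ℕ) (B : ℕ) : Set (Polynomial (MvPolynomial (Fin n) ℤ)) :=
  {F | F.Monic ∧ F.natDegree = D ∧ (∀ i, degX F i ≤ k i) ∧ polyNorm F ≤ B}

lemma mem_boxS {n D : ℕ} {k : Fin n → ℕ} {B : ℕ} {F : Polynomial (MvPolynomial (Fin n) ℤ)} :
    F ∈ boxS n D k B ↔ F.Monic ∧ F.natDegree = D ∧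
      ∀ j m, cf F j m ≠ 0 → (∀ i, m i ≤ k i) ∧ (cf F j m).natAbs ≤ B := by
  constructor
  · rintro ⟨h1, h2, h3, h4⟩
    refine ⟨h1, h2, fun j m hm => ⟨fun i => ?_, ?_⟩⟩
    · exact MvPolynomial.degreeOf_le_iff.mp (degreeOf_coeff_le (h3 i) j) _
        (MvPolynomial.mem_support_iff.mpr hm)
    · have hj : j ∈ F.support := by
        rw [mem_support_iff]; intro h; apply hm; rw [cf, h]; simp
      have := (Finset.le_sup (f := fun k => mvNorm (F.coeff k)) hj).trans h4
      exact (Finset.le_sup (f := fun m => ((F.coeff j).coeff m).natAbs)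
        (MvPolynomial.mem_support_iff.mpr hm)).trans this
  · rintro ⟨h1, h2, h3⟩
    refine ⟨h1, h2, fun i => degX_le fun j => MvPolynomial.degreeOf_le_iff.mpr fun m hm => ?_,
      Finset.sup_le fun j _ => Finset.sup_le fun m hm => ?_⟩
    · exact (h3 j m (MvPolynomial.mem_support_iff.mp hm)).1 i
    · exact (h3 j m (MvPolynomial.mem_support_iff.mp hm)).2

lemma boxS_finite (n D : ℕ) (k : Fin n → ℕ) (B : ℕ) : (boxS n D k B).Finite := by
  classical
  let g : Polynomial (MvPolynomial (Fin n) ℤ) → (Fin (D + 1) → (∀ i, Fin (k i + 1)) → ℤ) :=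
    fun F j m => cf F j (Finsupp.equivFunOnFinite.symm fun i => (m i : ℕ))
  have ht : (Set.univ.pi fun _ : Fin (D + 1) => Set.univ.pi fun _ : (∀ i, Fin (k i + 1)) =>
      Set.Icc (-(B : ℤ)) B).Finite :=
    Set.Finite.pi fun _ => Set.Finite.pi fun _ => Set.finite_Icc _ _
  refine Set.Finite.of_injOn (f := g) ?_ ?_ ht
  · intro F hF j _ m _
    rw [mem_boxS] at hF
    have h := hF.2.2 j (Finsupp.equivFunOnFinite.symm fun i => (m i : ℕ))
    simp only [g]
    by_cases h0 : cf F j (Finsupp.equivFunOnFinite.symm fun i => (m i : ℕ)) = 0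
    · rw [h0]; simp
    · have := (h h0).2
      rw [Set.mem_Icc]; omega
  · intro F hF F' hF' hg
    rw [mem_boxS] at hF hF'
    have key : ∀ j m, cf F j m = cf F' j m := by
      intro j m
      by_cases hj : j < D + 1
      · by_cases hm : ∀ i, m i ≤ k i
        · have := congrFun (congrFun hg ⟨j, hj⟩) (fun i => ⟨m i, Nat.lt_succ_of_le (hm i)⟩)
          simp only [g] at this
          have hmm : (Finsupp.equivFunOnFinite.symm fun i => m i) = m := by ext; rfl
          rwa [hmm] at this
        · have h1 : cf F j m = 0 := by by_contra h; exact hm (hF.2.2 j m h).1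
          have h2 : cf F' j m = 0 := by by_contra h; exact hm (hF'.2.2 j m h).1
          rw [h1, h2]
      · rw [cf, cf, coeff_eq_zero_of_natDegree_lt (by omega), coeff_eq_zero_of_natDegree_lt (by omega)]
    ext j m
    exact key j m

/-- `a Y^j X^m` -/
def mono {n : ℕ} (j : ℕ) (m : Fin n →₀ ℕ) (a : ℤ) : Polynomial (MvPolynomial (Fin n) ℤ) :=
  monomial j (MvPolynomial.monomial m a)

lemma cf_mono {n : ℕ} (j j' : ℕ) (m m' : Fin n →₀ ℕ) (a : ℤ) :
    cf (mono j m a) j' m' = if j = j' ∧ m = m' then a else 0 := by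
  classical
  rw [cf, mono, coeff_monomial]
  by_cases h : j = j' <;> simp [h, MvPolynomial.coeff_monomial]

lemma cf_add {n : ℕ} (F G : Polynomial (MvPolynomial (Fin n) ℤ)) (j : ℕ) (m : Fin n →₀ ℕ) :
    cf (F + G) j m = cf F j m + cf G j m := by simp [cf]

lemma cf_sub {n : ℕ} (F G : Polynomial (MvPolynomial (Fin n) ℤ)) (j : ℕ) (m : Fin n →₀ ℕ) :
    cf (F - G) j m = cf F j m - cf G j m := by simp [cf]

lemma mono_add {n : ℕ} (j : ℕ) (m : Fin n →₀ ℕ) (a b : ℤ) :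
    mono j m (a + b) = mono j m a + mono j m b := by simp [mono]

lemma update_mem {n D : ℕ} {k : Fin n → ℕ} {B : ℕ} {F : Polynomial (MvPolynomial (Fin n) ℤ)}
    (hF : F ∈ boxS n D k B) (j : ℕ) (hj : j < D) (m : Fin n →₀ ℕ) (hm : ∀ i, m i ≤ k i)
    (a : ℤ) (ha : a.natAbs ≤ B) :
    (F - mono j m (cf F j m)) + mono j m a ∈ boxS n D k B := by
  rw [mem_boxS] at hF ⊢
  have hdeg : (mono j m (a - cf F j m)).degree < F.degree := by
    rw [degree_eq_natDegree hF.1.ne_zero, hF.2.1]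
    refine lt_of_le_of_lt (degree_monomial_le _ _) ?_
    exact_mod_cast hj
  have heq : (F - mono j m (cf F j m)) + mono j m a = F + mono j m (a - cf F j m) := by
    have := mono_add j m (a - cf F j m) (cf F j m)
    rw [sub_add_cancel] at this
    rw [this]; ring
  rw [heq]
  refine ⟨hF.1.add_of_left hdeg, ?_, ?_⟩
  · rw [natDegree_add_eq_left_of_degree_lt hdeg, hF.2.1]
  · intro j' m'
    rw [cf_add, cf_mono]
    split_ifs with h
    · obtain ⟨rfl, rfl⟩ := h
      intro _
      exact ⟨hm, by rwa [add_sub_cancel]⟩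
    · rw [add_zero]; exact hF.2.2 j' m'

lemma count_fiber {n D : ℕ} (k : Fin n → ℕ) (B : ℕ) (j : ℕ) (hj : j < D) (m : Fin n →₀ ℕ)
    (hm : ∀ i, m i ≤ k i) (E : Set (Polynomial (MvPolynomial (Fin n) ℤ)))
    (hE : E ⊆ boxS n D k B) (c : ℕ)
    (hfib : ∀ P, cf P j m = 0 → ∃ A : Finset ℤ, A.card ≤ c ∧ ∀ a, P + mono j m a ∈ E → a ∈ A) :
    (2 * B + 1) * E.ncard ≤ c * (boxS n D k B).ncard := by
  classical
  have hfin := boxS_finite n D k B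
  have hEfin := hfin.subset hE
  let pr : Polynomial (MvPolynomial (Fin n) ℤ) → Polynomial (MvPolynomial (Fin n) ℤ) :=
    fun F => F - mono j m (cf F j m)
  have hpr0 : ∀ F, cf (pr F) j m = 0 := by
    intro F; simp only [pr, cf_sub, cf_mono]; simp
  have hback : ∀ F, pr F + mono j m (cf F j m) = F := fun F => by simp [pr]
  have hpradd : ∀ P a, cf P j m = 0 → cf (P + mono j m a) j m = a := by
    intro P a h; rw [cf_add, cf_mono, h]; simp
  rw [Set.ncard_eq_toFinset_card _ hfin, Set.ncard_eq_toFinset_card _ hEfin]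
  have h1 : hEfin.toFinset.card ≤ c * (hEfin.toFinset.image pr).card := by
    apply Finset.card_le_mul_card_image
    intro P hP
    obtain ⟨F0, hF0, rfl⟩ := Finset.mem_image.mp hP
    obtain ⟨A, hA, hAE⟩ := hfib (pr F0) (hpr0 F0)
    refine le_trans (Finset.card_le_card_of_injOn (fun F => cf F j m) ?_ ?_) hA
    · intro F hF
      simp only [Finset.coe_filter, Set.mem_ofPred_eq, Set.Finite.mem_toFinset] at hF
      apply hAE
      rw [← hF.2, hback]
      exact hF.1
    · intro F hF F' hF' heq
      simp only [Finset.coe_filter, Set.mem_ofPred_eq, Set.Finite.mem_toFinset] at hF hF'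
      simp only at heq
      rw [← hback F, ← hback F', hF.2, hF'.2, heq]
  have h2 : (2 * B + 1) * (hfin.toFinset.image pr).card ≤ hfin.toFinset.card := by
    apply Finset.mul_card_image_le_card
    intro P hP
    obtain ⟨F0, hF0, rfl⟩ := Finset.mem_image.mp hP
    rw [Set.Finite.mem_toFinset] at hF0
    have hcard : (Finset.Icc (-(B : ℤ)) B).card = 2 * B + 1 := by
      rw [Int.card_Icc]; omega
    rw [← hcard]
    refine Finset.card_le_card_of_injOn (fun a => pr F0 + mono j m a) ?_ ?_
    · intro a ha
      simp only [Finset.coe_Icc, Set.mem_Icc] at ha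
      simp only [Finset.coe_filter, Set.mem_ofPred_eq, Set.Finite.mem_toFinset]
      refine ⟨update_mem hF0 j hj m hm a (by omega), ?_⟩
      change (pr F0 + mono j m a) - mono j m (cf (pr F0 + mono j m a) j m) = pr F0
      rw [hpradd _ _ (hpr0 F0), add_sub_cancel_right]
    · intro a _ b _ hab
      have := congrArg (fun F => cf F j m) hab
      simpa [hpradd _ _ (hpr0 F0)] using this
  have h3 : (hEfin.toFinset.image pr).card ≤ (hfin.toFinset.image pr).card := by
    apply Finset.card_le_card
    apply Finset.image_subset_image
    intro x hx
    simp only [Set.Finite.mem_toFinset] at hx ⊢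
    exact hE hx
  calc (2 * B + 1) * hEfin.toFinset.card
      ≤ (2 * B + 1) * (c * (hfin.toFinset.image pr).card) :=
        Nat.mul_le_mul_left _ (h1.trans (Nat.mul_le_mul_left _ h3))
    _ = c * ((2 * B + 1) * (hfin.toFinset.image pr).card) := by ring
    _ ≤ c * hfin.toFinset.card := Nat.mul_le_mul_left _ h2

lemma count_zero {n D : ℕ} (k : Fin n → ℕ) (B : ℕ) (j : ℕ) (hj : j < D) (m : Fin n →₀ ℕ)
    (hm : ∀ i, m i ≤ k i) :
    (2 * B + 1) * {F ∈ boxS n D k B | cf F j m = 0}.ncard ≤ 1 * (boxS n D k B).ncard := by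
  apply count_fiber k B j hj m hm _ (fun F hF => hF.1)
  intro P hP
  refine ⟨{0}, by simp, fun a ha => ?_⟩
  have := ha.2
  rw [cf_add, cf_mono, hP] at this
  simpa using this

lemma count_res {n D : ℕ} (hD : 2 ≤ D) (k : Fin n → ℕ) (hk : ∀ i, 1 ≤ k i) (B : ℕ) (i0 : Fin n) :
    (2 * B + 1) * {F ∈ boxS n D k B | cf F (D - 1) (Finsupp.single i0 (k i0)) ≠ 0 ∧
      ∃ r, (rowP D i0 F 0).eval r = 0 ∧ (rowP D i0 F (k i0)).eval r = 0}.ncard ≤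
      D * (boxS n D k B).ncard := by
  classical
  apply count_fiber k B 0 (by omega) 0 (by simp) _ (fun F hF => hF.1)
  intro P hP
  have hrow0 : ∀ a, rowP D i0 (P + mono 0 0 a) 0 = rowP D i0 P 0 + C (a : AlgebraicClosure ℚ) := by
    intro a
    simp only [rowP, cf_add, cf_mono]
    simp only [Int.cast_add, map_add, add_mul, Finset.sum_add_distrib]
    congr 1
    rw [Finset.sum_eq_single 0]
    · simp
    · intro j _ hj; simp [Ne.symm hj]
    · simp
  have hne : (0 : Fin n →₀ ℕ) ≠ Finsupp.single i0 (k i0) := by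
    intro h
    have := DFunLike.congr_fun h i0
    simp at this
    have := hk i0
    omega
  have hcfk : ∀ a j, cf (P + mono 0 0 a) j (Finsupp.single i0 (k i0)) =
      cf P j (Finsupp.single i0 (k i0)) := by
    intro a j
    rw [cf_add, cf_mono]
    simp [hne]
  have hrowk : ∀ a, rowP D i0 (P + mono 0 0 a) (k i0) = rowP D i0 P (k i0) := by
    intro a
    simp only [rowP, hcfk]
  have hinj : Function.Injective (Int.cast : ℤ → AlgebraicClosure ℚ) := Int.cast_injective
  let R := (rowP D i0 P (k i0)).roots.toFinset.image (fun r => - (rowP D i0 P 0).eval r)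
  refine ⟨R.preimage Int.cast hinj.injOn, ?_, ?_⟩
  · have h1 : (R.preimage Int.cast hinj.injOn).card ≤ R.card :=
      Finset.card_le_card_of_injOn Int.cast (by intro a ha; simpa using ha) hinj.injOn
    refine h1.trans (Finset.card_image_le.trans ((Multiset.toFinset_card_le _).trans
      ((card_roots' _).trans ?_)))
    apply natDegree_sum_le_of_forall_le
    intro j hj
    refine (natDegree_C_mul_X_pow_le _ _).trans ?_
    rw [Finset.mem_range] at hj; omega
  · intro a ha
    obtain ⟨-, hc, r, hr0, hrk⟩ := ha
    rw [hcfk] at hc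
    rw [hrow0, eval_add, eval_C] at hr0
    rw [hrowk] at hrk
    rw [Finset.mem_preimage, Finset.mem_image]
    refine ⟨r, ?_, by linear_combination -hr0⟩
    rw [Multiset.mem_toFinset, mem_roots']
    refine ⟨?_, hrk⟩
    intro h0
    have := congrArg (fun p => p.coeff (D - 1)) h0
    simp only [rowP, finsetSum_coeff, coeff_C_mul, coeff_X_pow, mul_ite, mul_one, mul_zero,
      Finset.sum_ite_eq, coeff_zero] at this
    rw [if_pos (Finset.mem_range.mpr (by omega))] at this
    exact hc (by exact_mod_cast this)

theorem statement8 (n D : ℕ) (hn : 2 ≤ n) (hD : 2 ≤ D) (k : Fin n → ℕ)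
    (hk : ∀ i, 1 ≤ k i) :
    ∃ C : ℝ, 0 < C ∧ ∀ T : ℝ, 1 ≤ T →
      (Set.ncard {F : Polynomial (MvPolynomial (Fin n) ℤ) |
          F.Monic ∧ F.natDegree = D ∧ (∀ i, degX F i ≤ k i) ∧ (polyNorm F : ℝ) ≤ T ∧
          ¬ IsStronglyAllowable F} : ℝ) ≤
        (C / T) *
          (Set.ncard {F : Polynomial (MvPolynomial (Fin n) ℤ) |
            F.Monic ∧ F.natDegree = D ∧ (∀ i, degX F i ≤ k i) ∧ (polyNorm F : ℝ) ≤ T} : ℝ) := by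
  have hn0 : 0 < n := by omega
  let i0 : Fin n := ⟨0, hn0⟩
  refine ⟨D + 2, by positivity, fun T hT => ?_⟩
  set B := ⌊T⌋₊ with hB
  have hT0 : 0 ≤ T := by linarith
  have hS : {F : Polynomial (MvPolynomial (Fin n) ℤ) |
      F.Monic ∧ F.natDegree = D ∧ (∀ i, degX F i ≤ k i) ∧ (polyNorm F : ℝ) ≤ T} =
      boxS n D k B := by
    ext F
    simp only [boxS, Set.mem_ofPred_eq, hB, Nat.le_floor_iff hT0]
  rw [hS]
  set kk : Fin n →₀ ℕ := Finsupp.equivFunOnFinite.symm k with hkk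
  set E1 := {F ∈ boxS n D k B | cf F (D - 1) kk = 0} with hE1
  set E2 := {F ∈ boxS n D k B | cf F (D - 1) (Finsupp.single i0 (k i0)) = 0} with hE2
  set E3 := {F ∈ boxS n D k B | cf F (D - 1) (Finsupp.single i0 (k i0)) ≠ 0 ∧
      ∃ r, (rowP D i0 F 0).eval r = 0 ∧ (rowP D i0 F (k i0)).eval r = 0} with hE3
  have h1 : (2 * B + 1) * E1.ncard ≤ 1 * (boxS n D k B).ncard :=
    count_zero k B (D - 1) (by omega) kk (fun i => le_rfl)
  have h2 : (2 * B + 1) * E2.ncard ≤ 1 * (boxS n D k B).ncard := by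
    apply count_zero k B (D - 1) (by omega)
    intro i
    by_cases hi : i = i0
    · subst hi; simp
    · rw [Finsupp.single_eq_of_ne hi]; exact Nat.zero_le _
  have h3 : (2 * B + 1) * E3.ncard ≤ D * (boxS n D k B).ncard := count_res hD k hk B i0
  set bad := {F : Polynomial (MvPolynomial (Fin n) ℤ) |
      F.Monic ∧ F.natDegree = D ∧ (∀ i, degX F i ≤ k i) ∧ (polyNorm F : ℝ) ≤ T ∧
      ¬ IsStronglyAllowable F} with hbad
  have hfin := boxS_finite n D k B
  have hsub : bad ⊆ E1 ∪ E2 ∪ E3 := by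
    rintro F ⟨hF, hFD, hdeg, hnorm, hna⟩
    have hmem : F ∈ boxS n D k B := by
      rw [← hS]; exact ⟨hF, hFD, hdeg, hnorm⟩
    by_contra hcon
    simp only [Set.mem_union, not_or] at hcon
    obtain ⟨⟨hc1, hc2⟩, hc3⟩ := hcon
    have hc1 : cf F (D - 1) kk ≠ 0 := fun h => hc1 ⟨hmem, h⟩
    have hc2 : cf F (D - 1) (Finsupp.single i0 (k i0)) ≠ 0 := fun h => hc2 ⟨hmem, h⟩
    apply hna
    refine ⟨absIrred_of hD k F hF hFD hdeg i0 hc2 ?_, hF,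
      fun σ hσ => strongly_genuine hD k hk F hF hFD hdeg hc1 σ hσ⟩
    intro r hr
    exact hc3 ⟨hmem, hc2, r, hr⟩
  have hfinU : (E1 ∪ E2 ∪ E3).Finite :=
    hfin.subset (by rintro F ((h | h) | h) <;> exact h.1)
  have hle : bad.ncard ≤ E1.ncard + E2.ncard + E3.ncard :=
    (Set.ncard_le_ncard hsub hfinU).trans ((Set.ncard_union_le _ _).trans
      (Nat.add_le_add_right (Set.ncard_union_le _ _) _))
  have htot : (2 * B + 1) * bad.ncard ≤ (D + 2) * (boxS n D k B).ncard := by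
    calc (2 * B + 1) * bad.ncard ≤ (2 * B + 1) * (E1.ncard + E2.ncard + E3.ncard) :=
          Nat.mul_le_mul_left _ hle
      _ = (2 * B + 1) * E1.ncard + (2 * B + 1) * E2.ncard + (2 * B + 1) * E3.ncard := by ring
      _ ≤ 1 * (boxS n D k B).ncard + 1 * (boxS n D k B).ncard + D * (boxS n D k B).ncard := by
          gcongr
      _ = (D + 2) * (boxS n D k B).ncard := by ring
  have htotR : ((2 * B + 1 : ℕ) : ℝ) * bad.ncard ≤ (D + 2) * (boxS n D k B).ncard := by
    exact_mod_cast htot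
  have hTB : T ≤ ((2 * B + 1 : ℕ) : ℝ) := by
    have := Nat.lt_floor_add_one T
    push_cast
    have hB0 : (0 : ℝ) ≤ B := Nat.cast_nonneg _
    rw [← hB] at this
    linarith
  rw [div_mul_eq_mul_div, le_div_iff₀ (by linarith)]
  have : T * (bad.ncard : ℝ) ≤ ((2 * B + 1 : ℕ) : ℝ) * bad.ncard :=
    mul_le_mul_of_nonneg_right hTB (Nat.cast_nonneg _)
  linarith
end
end

section
/- Let n ≥ 2 and let F(Y,X₁,…,Xₙ) ∈ ℤ[Y,X₁,…,Xₙ] be an n-genuine polynomial. Then there is a constant C depending only on n and deg F such that for all real B ≥ 1: #{x′ = (x₂,…,xₙ) ∈ ℤ^{n−1} ∩ [−B,B]^{n−1} : F(Y,X₁,x₂,…,xₙ) has a linear factor in Y over ℚ̄} ≤ C · B^{n−2}. -/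
open Polynomial

noncomputable section

theorem amalgam {K0 L K : Type} [Field K0] [Field L] [Field K] (g1 : K0 →+* K) (g2 : K0 →+* L) :
    ∃ (Ω : Type) (_ : Field Ω) (a : L →+* Ω) (b : K →+* Ω), a.comp g2 = b.comp g1 := by
  let _ := g1.toAlgebra
  let _ := g2.toAlgebra
  obtain ⟨M, hM⟩ := Ideal.exists_maximal (TensorProduct K0 L K)
  refine ⟨TensorProduct K0 L K ⧸ M, Ideal.Quotient.field M,
    (Ideal.Quotient.mk M).comp Algebra.TensorProduct.includeLeftRingHom,
    (Ideal.Quotient.mk M).comp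
      (Algebra.TensorProduct.includeRight : K →ₐ[K0] TensorProduct K0 L K).toRingHom, ?_⟩
  ext r
  simp only [RingHom.comp_apply]
  congr 1
  change (algebraMap K0 L r) ⊗ₜ[K0] (1 : K) = (1 : L) ⊗ₜ[K0] (algebraMap K0 K r)
  rw [Algebra.algebraMap_eq_smul_one, Algebra.algebraMap_eq_smul_one, TensorProduct.smul_tmul]

theorem common_field {R A K : Type} [CommRing R] [CommRing A] [Field K]
    (φ : R →+* K) (ψ : R →+* A) (P : Ideal A) [P.IsPrime] (h : P.comap ψ = RingHom.ker φ) :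
    ∃ (Ω : Type) (_ : Field Ω) (a : A →+* Ω) (b : K →+* Ω),
      a.comp ψ = b.comp φ ∧ ∀ x ∈ P, a x = 0 := by
  have hpp : (RingHom.ker φ).IsPrime := RingHom.ker_isPrime φ
  let f1 : R ⧸ RingHom.ker φ →+* K := RingHom.kerLift φ
  have hf1 : Function.Injective f1 := RingHom.kerLift_injective φ
  let f2' : R ⧸ RingHom.ker φ →+* A ⧸ P := Ideal.quotientMap P ψ h.symm.le
  have hf2' : Function.Injective f2' := Ideal.quotientMap_injective' h.le
  let f2 : R ⧸ RingHom.ker φ →+* FractionRing (A ⧸ P) :=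
    (algebraMap (A ⧸ P) (FractionRing (A ⧸ P))).comp f2'
  have hf2 : Function.Injective f2 :=
    (IsFractionRing.injective (A ⧸ P) (FractionRing (A ⧸ P))).comp hf2'
  let g1 : FractionRing (R ⧸ RingHom.ker φ) →+* K := IsFractionRing.lift hf1
  let g2 : FractionRing (R ⧸ RingHom.ker φ) →+* FractionRing (A ⧸ P) := IsFractionRing.lift hf2
  obtain ⟨Ω, _, a, b, hab⟩ := amalgam g1 g2
  refine ⟨Ω, inferInstance,
    a.comp ((algebraMap (A ⧸ P) (FractionRing (A ⧸ P))).comp (Ideal.Quotient.mk P)), b, ?_, ?_⟩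
  · ext r
    have h1 : g1 (algebraMap _ _ (Ideal.Quotient.mk (RingHom.ker φ) r)) = φ r := by
      rw [IsFractionRing.lift_algebraMap]
      exact RingHom.kerLift_mk φ r
    have h2 : g2 (algebraMap _ _ (Ideal.Quotient.mk (RingHom.ker φ) r)) =
        algebraMap (A ⧸ P) (FractionRing (A ⧸ P)) (Ideal.Quotient.mk P (ψ r)) := by
      rw [IsFractionRing.lift_algebraMap]
      rfl
    have h3 := RingHom.congr_fun hab (algebraMap _ _ (Ideal.Quotient.mk (RingHom.ker φ) r))
    simp only [RingHom.comp_apply] at h3 ⊢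
    rw [← h1, ← h2, h3]
  · intro x hx
    simp [Ideal.Quotient.eq_zero_iff_mem.mpr hx]

/-- The structure map from the parameter ring to the coordinate ring of the system. -/
noncomputable def qmap {ι τ : Type} (I : Ideal (MvPolynomial τ (MvPolynomial ι ℤ))) :
    MvPolynomial ι ℤ →+* (MvPolynomial τ (MvPolynomial ι ℤ) ⧸ I) :=
  RingHom.comp (Ideal.Quotient.mk I) MvPolynomial.C

theorem qe_fwd {ι τ : Type} (I : Ideal (MvPolynomial τ (MvPolynomial ι ℤ)))
    (K : Type) [Field K] (φ : MvPolynomial ι ℤ →+* K) (q : τ → K)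
    (hq : ∀ f ∈ I, MvPolynomial.eval₂Hom φ q f = 0) :
    (⟨RingHom.ker φ, RingHom.ker_isPrime φ⟩ : PrimeSpectrum (MvPolynomial ι ℤ)) ∈
      Set.range (PrimeSpectrum.comap (S := MvPolynomial τ (MvPolynomial ι ℤ) ⧸ I) (qmap I)) := by
  let g := Ideal.Quotient.lift I (MvPolynomial.eval₂Hom φ q) hq
  refine ⟨⟨RingHom.ker g, RingHom.ker_isPrime g⟩, ?_⟩
  ext r
  simp [g, RingHom.mem_ker, qmap]

theorem qe_bwd {ι τ : Type} [Finite τ] (I : Ideal (MvPolynomial τ (MvPolynomial ι ℤ)))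
    (K : Type) [Field K] [IsAlgClosed K] (φ : MvPolynomial ι ℤ →+* K)
    (h : (⟨RingHom.ker φ, RingHom.ker_isPrime φ⟩ : PrimeSpectrum (MvPolynomial ι ℤ)) ∈
      Set.range (PrimeSpectrum.comap (S := MvPolynomial τ (MvPolynomial ι ℤ) ⧸ I) (qmap I))) :
    ∃ q : τ → K, ∀ f ∈ I, MvPolynomial.eval₂Hom φ q f = 0 := by
  obtain ⟨P, hP⟩ := h
  have hP' := congrArg PrimeSpectrum.asIdeal hP
  simp only [PrimeSpectrum.comap_asIdeal] at hP'
  have := P.2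
  obtain ⟨Ω, _, a, b, hab, ha⟩ := common_field (A := MvPolynomial τ (MvPolynomial ι ℤ) ⧸ I) φ
    (qmap I) P.asIdeal hP'
  let J : Ideal (MvPolynomial τ K) := I.map (MvPolynomial.map φ)
  let e : MvPolynomial τ K →+* Ω :=
    MvPolynomial.eval₂Hom b (fun t => a (Ideal.Quotient.mk I (MvPolynomial.X t)))
  have he : e.comp (MvPolynomial.map φ) = a.comp (Ideal.Quotient.mk I) := by
    apply MvPolynomial.ringHom_ext
    · intro r
      have := RingHom.congr_fun hab r
      simp only [RingHom.comp_apply, qmap] at this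
      simp [e, this]
    · intro i
      simp [e]
  have hJ : J ≠ ⊤ := by
    intro hJ
    have : J ≤ RingHom.ker e := by
      rw [Ideal.map_le_iff_le_comap]
      intro x hx
      have h1 := RingHom.congr_fun he x
      simp only [RingHom.comp_apply] at h1
      simp only [Ideal.mem_comap, RingHom.mem_ker]
      rw [h1, Ideal.Quotient.eq_zero_iff_mem.mpr hx, map_zero]
    rw [hJ, top_le_iff] at this
    exact RingHom.ker_ne_top e this
  have hne : (MvPolynomial.zeroLocus K J).Nonempty := by
    by_contra hcon
    rw [Set.not_nonempty_iff_eq_empty] at hcon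
    have := MvPolynomial.vanishingIdeal_zeroLocus_eq_radical (K := K) J
    rw [hcon, MvPolynomial.vanishingIdeal_empty] at this
    exact hJ (Ideal.radical_eq_top.mp this.symm)
  obtain ⟨q, hq⟩ := hne
  refine ⟨q, fun f hf => ?_⟩
  have := (MvPolynomial.mem_zeroLocus_iff.mp hq) _ (Ideal.mem_map_of_mem (MvPolynomial.map φ) hf)
  rw [MvPolynomial.aeval_def, MvPolynomial.eval₂_map] at this
  simpa using this

theorem qe {ι τ : Type} [Finite ι] [Finite τ] (I : Ideal (MvPolynomial τ (MvPolynomial ι ℤ))) :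
    ∃ S : Finset (PrimeSpectrum.BasicConstructibleSetData (MvPolynomial ι ℤ)),
    (∀ (K : Type) [Field K] (φ : MvPolynomial ι ℤ →+* K) (q : τ → K),
      (∀ f ∈ I, MvPolynomial.eval₂Hom φ q f = 0) →
        ∃ c ∈ S, φ c.f ≠ 0 ∧ ∀ i, φ (c.g i) = 0) ∧
    (∀ (K : Type) [Field K] [IsAlgClosed K] (φ : MvPolynomial ι ℤ →+* K),
      (∃ c ∈ S, φ c.f ≠ 0 ∧ ∀ i, φ (c.g i) = 0) →
      ∃ q : τ → K, ∀ f ∈ I, MvPolynomial.eval₂Hom φ q f = 0) := by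
  have hfp : RingHom.FinitePresentation (A := MvPolynomial ι ℤ)
      (B := MvPolynomial τ (MvPolynomial ι ℤ) ⧸ I) (qmap I) := by
    rw [← RingHom.FinitePresentation.of_finiteType]
    apply RingHom.FiniteType.comp_surjective
    · exact RingHom.finiteType_algebraMap.mpr inferInstance
    · exact Ideal.Quotient.mk_surjective
  obtain ⟨S, hS⟩ := PrimeSpectrum.exists_constructibleSetData_iff.mpr
    (PrimeSpectrum.isConstructible_range_comap hfp)
  have key : ∀ (K : Type) [Field K] (φ : MvPolynomial ι ℤ →+* K),
      (⟨RingHom.ker φ, RingHom.ker_isPrime φ⟩ : PrimeSpectrum (MvPolynomial ι ℤ)) ∈ S.toSet ↔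
      ∃ c ∈ S, φ c.f ≠ 0 ∧ ∀ i, φ (c.g i) = 0 := by
    intro K _ φ
    simp only [PrimeSpectrum.ConstructibleSetData.toSet, Set.mem_iUnion,
      PrimeSpectrum.BasicConstructibleSetData.toSet, Set.mem_sdiff, PrimeSpectrum.mem_zeroLocus]
    refine exists_congr fun c => ?_
    rw [exists_prop]
    refine and_congr_right fun _ => ?_
    rw [and_comm]
    simp [Set.range_subset_iff, RingHom.mem_ker]
  refine ⟨S, fun K _ φ q hq => ?_, fun K _ _ φ h => ?_⟩
  · rw [← key, hS]
    exact qe_fwd I K φ q hq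
  · rw [← key, hS] at h
    exact qe_bwd I K φ h

theorem totalDegree_aeval_le_mul {ι κ : Type} (r : MvPolynomial ι ℤ) (v : ι → MvPolynomial κ ℤ)
    (D : ℕ) (hv : ∀ i, (v i).totalDegree ≤ D) :
    (MvPolynomial.aeval v r).totalDegree ≤ r.totalDegree * D := by
  rw [MvPolynomial.aeval_def, MvPolynomial.eval₂_eq]
  refine (MvPolynomial.totalDegree_finsetSum_le (d := r.totalDegree * D) ?_)
  intro s hs
  refine (MvPolynomial.totalDegree_mul _ _).trans ?_
  have h0 : (algebraMap ℤ (MvPolynomial κ ℤ) (MvPolynomial.coeff s r)).totalDegree = 0 :=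
    MvPolynomial.totalDegree_C _
  rw [h0, zero_add]
  refine (MvPolynomial.totalDegree_finsetProd _ _).trans ?_
  calc ∑ i ∈ s.support, (v i ^ s i).totalDegree ≤ ∑ i ∈ s.support, s i * D :=
        Finset.sum_le_sum fun i _ => (MvPolynomial.totalDegree_pow _ _).trans
          (Nat.mul_le_mul_left _ (hv i))
    _ = (∑ i ∈ s.support, s i) * D := by rw [Finset.sum_mul]
    _ ≤ r.totalDegree * D := Nat.mul_le_mul_right _ (MvPolynomial.le_totalDegree hs)

/-- The universal expression `P(Q(X), X)`. -/
noncomputable def univE (D : ℕ) :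
    (MvPolynomial (Fin (D + 1)) (MvPolynomial (Fin (D + 1) × Fin (D + 1)) ℤ))[X] :=
  ∑ k : Fin (D + 1), (∑ l : Fin (D + 1), C (MvPolynomial.C (MvPolynomial.X (k, l))) * X ^ (l : ℕ)) *
    (∑ i : Fin (D + 1), C (MvPolynomial.X i) * X ^ (i : ℕ)) ^ (k : ℕ)

theorem univE_map (D m : ℕ) (K : Type) [Field K] (Ft : (MvPolynomial (Fin m) ℤ)[X][X])
    (h1 : Ft.natDegree ≤ D) (h2 : ∀ k, (Ft.coeff k).natDegree ≤ D)
    (ψ : MvPolynomial (Fin m) ℤ →+* K) (q : Fin (D + 1) → K) :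
    (univE D).map (MvPolynomial.eval₂Hom
      (ψ.comp (MvPolynomial.aeval (R := ℤ) (fun p : Fin (D + 1) × Fin (D + 1) =>
        (Ft.coeff p.1).coeff p.2)).toRingHom) q) =
    eval (∑ i : Fin (D + 1), C (q i) * X ^ (i : ℕ)) (Ft.map (mapRingHom ψ)) := by
  have e2 : ∀ k, (Ft.coeff k).map ψ = ∑ l : Fin (D + 1), C (ψ ((Ft.coeff k).coeff l)) * X ^ (l : ℕ) := by
    intro k
    conv_lhs => rw [as_sum_range_C_mul_X_pow' (Ft.coeff k) (n := D + 1) (by have := h2 k; omega)]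
    rw [Finset.sum_range]
    simp [Polynomial.map_sum]
  rw [eval_map, eval₂_eq_sum_range' (n := D + 1) _ (by omega), Finset.sum_range]
  simp only [univE, Polynomial.map_sum, Polynomial.map_mul, Polynomial.map_pow, map_C, map_X,
    coe_mapRingHom, e2]
  simp

theorem uniform (D : ℕ) : ∃ M : ℕ, ∀ (m : ℕ) (Ft : (MvPolynomial (Fin m) ℤ)[X][X]),
    Ft.natDegree ≤ D → (∀ k, (Ft.coeff k).natDegree ≤ D) →
    (∀ k l, ((Ft.coeff k).coeff l).totalDegree ≤ D) →
    ∀ (K : Type) [Field K] [IsAlgClosed K] (ψ : MvPolynomial (Fin m) ℤ →+* K),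
      Function.Injective ψ →
      (∀ Q : K[X], eval Q (Ft.map (mapRingHom ψ)) ≠ 0) →
      ∃ h : MvPolynomial (Fin m) ℤ, h ≠ 0 ∧ h.totalDegree ≤ M ∧
        ∀ (L : Type) [Field L] (χ : MvPolynomial (Fin m) ℤ →+* L) (Q : L[X]), Q.natDegree ≤ D →
          eval Q (Ft.map (mapRingHom χ)) = 0 → χ h = 0 := by
  classical
  obtain ⟨S, hS1, hS2⟩ := qe (Ideal.span (Set.range (univE D).coeff))
  refine ⟨∑ c ∈ S, ∑ i, (c.g i).totalDegree * D, ?_⟩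
  intro m Ft h1 h2 h3 K _ _ ψ hψ hgen
  set φ := (MvPolynomial.aeval (R := ℤ) (fun p : Fin (D + 1) × Fin (D + 1) =>
        (Ft.coeff p.1).coeff p.2)).toRingHom with hφ
  have hdeg : ∀ r, (φ r).totalDegree ≤ r.totalDegree * D := fun r =>
    totalDegree_aeval_le_mul r _ D (fun p => h3 _ _)
  have hnot : ∀ c ∈ S, φ c.f ≠ 0 → ∃ i, φ (c.g i) ≠ 0 := by
    intro c hc hf
    by_contra! hcon
    obtain ⟨q, hq⟩ := hS2 K (ψ.comp φ) ⟨c, hc, by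
      simpa using (map_ne_zero_iff ψ hψ).mpr hf, fun i => by simp [hcon i]⟩
    apply hgen (∑ i : Fin (D + 1), C (q i) * X ^ (i : ℕ))
    rw [← univE_map D m K Ft h1 h2 ψ q]
    ext j
    rw [coeff_map, coeff_zero]
    exact hq _ (Ideal.subset_span ⟨j, rfl⟩)
  have hch : ∀ c : PrimeSpectrum.BasicConstructibleSetData
      (MvPolynomial (Fin (D + 1) × Fin (D + 1)) ℤ), ∃ h : MvPolynomial (Fin m) ℤ, c ∈ S →
      (h ≠ 0 ∧ h.totalDegree ≤ ∑ i, (c.g i).totalDegree * D ∧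
      (φ c.f ≠ 0 → ∃ i, h = φ (c.g i))) := by
    intro c
    by_cases hc : c ∈ S
    · by_cases hf : φ c.f = 0
      · exact ⟨1, fun _ => ⟨one_ne_zero, by simp, fun h => absurd hf h⟩⟩
      · obtain ⟨i, hi⟩ := hnot c hc hf
        refine ⟨φ (c.g i), fun _ => ⟨hi, (hdeg _).trans ?_, fun _ => ⟨i, rfl⟩⟩⟩
        exact Finset.single_le_sum (f := fun i => (c.g i).totalDegree * D)
          (fun _ _ => Nat.zero_le _) (Finset.mem_univ i)
    · exact ⟨0, fun h => absurd h hc⟩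
  choose h hh using hch
  refine ⟨∏ c ∈ S, h c, ?_, ?_, ?_⟩
  · exact Finset.prod_ne_zero_iff.mpr fun c hc => (hh c hc).1
  · exact (MvPolynomial.totalDegree_finsetProd _ _).trans
      (Finset.sum_le_sum fun c hc => (hh c hc).2.1)
  · intro L _ χ Q hQ hev
    have hQ' : Q = ∑ i : Fin (D + 1), C (Q.coeff i) * X ^ (i : ℕ) := by
      conv_lhs => rw [as_sum_range_C_mul_X_pow' Q (n := D + 1) (by omega)]
      rw [Finset.sum_range]
    rw [hQ', ← univE_map D m L Ft h1 h2 χ (fun i => Q.coeff i), ← hφ] at hev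
    obtain ⟨c, hc, hcf, hcg⟩ := hS1 L (χ.comp φ) (fun i => Q.coeff i) (by
      intro f hf
      have : Ideal.span (Set.range (univE D).coeff) ≤
          RingHom.ker (MvPolynomial.eval₂Hom (χ.comp φ) (fun i : Fin (D + 1) => Q.coeff i)) := by
        rw [Ideal.span_le]
        rintro _ ⟨j, rfl⟩
        have := congrArg (fun p => coeff p j) hev
        exact RingHom.mem_ker.mpr (by simpa only [coeff_map, coeff_zero] using this)
      exact this hf)
    rw [map_prod]
    apply Finset.prod_eq_zero hc
    obtain ⟨i, hi⟩ := (hh c hc).2.2 (fun h0 => hcf (by simp [h0]))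
    rw [hi]
    exact hcg i

open IntermediateField in
theorem finrank_le_of_root {k K : Type} [Field k] [CharZero k] [Field K] [IsAlgClosed K]
    [Algebra k K] (E : IntermediateField k K) [FiniteDimensional k E]
    (P : k[X][X]) (hP : P ≠ 0) (Q : E[X])
    (hE : ∀ σ τ : E →ₐ[k] K, (∀ i, σ (Q.coeff i) = τ (Q.coeff i)) → σ = τ)
    (hQ : eval Q (P.map (mapRingHom (algebraMap k E))) = 0) :
    Module.finrank k E ≤ P.natDegree := by
  classical
  rw [← AlgHom.card k E K]
  let PK : K[X][X] := P.map (mapRingHom (algebraMap k K))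
  have hinj : Function.Injective (mapRingHom (algebraMap k K)) :=
    map_injective _ (algebraMap k K).injective
  have hPK : PK ≠ 0 := (Polynomial.map_ne_zero_iff hinj).mpr hP
  have hroot : ∀ σ : E →ₐ[k] K, Q.map σ.toRingHom ∈ PK.roots := by
    intro σ
    rw [mem_roots hPK, IsRoot]
    have h1 : PK = (P.map (mapRingHom (algebraMap k E))).map (mapRingHom σ.toRingHom) := by
      have h3 : σ.toRingHom.comp (algebraMap k E) = algebraMap k K := σ.comp_algebraMap
      rw [Polynomial.map_map, mapRingHom_comp, h3]
    have h2 : eval (mapRingHom σ.toRingHom Q)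
        ((P.map (mapRingHom (algebraMap k E))).map (mapRingHom σ.toRingHom)) = 0 := by
      rw [eval_map_apply, hQ, map_zero]
    rw [h1]
    exact h2
  have hI : Function.Injective (fun σ : E →ₐ[k] K => Q.map σ.toRingHom) := by
    intro σ τ h
    apply hE
    intro i
    have := congrArg (fun p => coeff p i) h
    simpa using this
  calc Fintype.card (E →ₐ[k] K) = (Finset.univ.image (fun σ : E →ₐ[k] K => Q.map σ.toRingHom)).card := by
        rw [Finset.card_image_of_injective _ hI, Finset.card_univ]
    _ ≤ PK.roots.toFinset.card := by
        apply Finset.card_le_card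
        intro x hx
        obtain ⟨σ, -, rfl⟩ := Finset.mem_image.mp hx
        exact Multiset.mem_toFinset.mpr (hroot σ)
    _ ≤ Multiset.card PK.roots := Multiset.toFinset_card_le _
    _ ≤ PK.natDegree := card_roots' _
    _ ≤ P.natDegree := natDegree_map_le

open IntermediateField in
theorem descend {k K N Ω : Type} [Field k] [CharZero k] [Field K] [IsAlgClosed K]
    [Algebra k K] [Algebra.IsAlgebraic k K] [Field N] [Field Ω] [Algebra N Ω]
    (i : k →+* N) (e : K[X] →+* Ω) (t : N) (ht : algebraMap N Ω t = e X)
    (hcomm : ∀ a : k, algebraMap N Ω (i a) = e (C (algebraMap k K a)))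
    (P : k[X][X]) (F : N[X]) (hF : Irreducible F) (hdeg : P.natDegree = F.natDegree)
    (hP : P ≠ 0)
    (hPF : F.map (algebraMap N Ω) = P.map (e.comp (mapRingHom (algebraMap k K))))
    (Q : K[X]) (hQ : eval Q (P.map (mapRingHom (algebraMap k K))) = 0) :
    ∃ g : k[X], Irreducible (g.map i) ∧
      Nonempty (AdjoinRoot (g.map i) ≃ₐ[N] AdjoinRoot F) := by
  let E : IntermediateField k K := adjoin k (Q.coeffs : Set K)
  have hfin : FiniteDimensional k E := by
    have : Finite (Q.coeffs : Set K) := Q.coeffs.finite_toSet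
    exact finiteDimensional_adjoin fun x _ => (Algebra.IsAlgebraic.isAlgebraic x).isIntegral
  have hmem : ∀ j, Q.coeff j ∈ E := by
    intro j
    by_cases h : Q.coeff j = 0
    · rw [h]; exact zero_mem _
    · exact subset_adjoin _ _ (coeff_mem_coeffs h)
  obtain ⟨QE, hQE⟩ : ∃ QE : E[X], QE.map (algebraMap E K) = Q := by
    have : Q ∈ lifts (algebraMap E K) := by
      rw [lifts_iff_coeff_lifts]
      intro j
      exact ⟨⟨_, hmem j⟩, rfl⟩
    exact this
  have hQEc : ∀ j, ((QE.coeff j : E) : K) = Q.coeff j := by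
    intro j
    rw [← hQE, coeff_map]
    rfl
  have hle : Module.finrank k E ≤ P.natDegree := by
    apply finrank_le_of_root E P hP QE
    · intro σ τ h
      apply IntermediateField.algHom_ext_of_eq_adjoin (F := k) (S := E) (hS := rfl)
      intro x hx
      obtain ⟨j, hj1, hj2⟩ := (mem_coeffs_iff).mp hx
      have : (⟨x, IntermediateField.subset_adjoin k _ hx⟩ : E) = QE.coeff j := by
        apply Subtype.ext
        exact hj2.trans (hQEc j).symm
      rw [this]
      exact h j
    · have h0 : Function.Injective (mapRingHom (algebraMap E K)) :=
        map_injective _ (algebraMap E K).injective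
      apply h0
      rw [map_zero, ← eval_map_apply, Polynomial.map_map, mapRingHom_comp]
      have : mapRingHom (algebraMap E K) QE = Q := hQE
      rw [this, ← IsScalarTower.algebraMap_eq k E K]
      exact hQ
  let pb : PowerBasis k E := Field.powerBasisOfFiniteOfSeparable k E
  let α : E := pb.gen
  let g := minpoly k α
  have hgdeg : g.natDegree = Module.finrank k E := by
    rw [pb.finrank]; exact pb.natDegree_minpoly
  have hgmonic : g.Monic := minpoly.monic (Algebra.IsIntegral.isIntegral α)
  let β : Ω := e (C (α : K))
  let e' : E →+* Ω := (e.comp C).comp (algebraMap E K)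
  have he' : ∀ p : k[X], e' (aeval α p) = aeval β (p.map i) := by
    intro p
    rw [aeval_def, aeval_def, eval₂_map, hom_eval₂]
    congr 1
    ext a
    simp only [RingHom.comp_apply, hcomm, e']
    rfl
  have hgβ : aeval β (g.map i) = 0 := by
    rw [← he', minpoly.aeval, map_zero]
  have hβint : IsIntegral N β := ⟨g.map i, hgmonic.map i, by rw [← aeval_def]; exact hgβ⟩
  have he'mem : ∀ x : E, e' x ∈ N⟮β⟯ := by
    intro x
    obtain ⟨p, hp⟩ := pb.exists_eq_aeval' x
    rw [hp, he']
    have hb : β ∈ N⟮β⟯ := mem_adjoin_simple_self N β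
    have h5 : aeval β (p.map i) = ((aeval (⟨β, hb⟩ : N⟮β⟯) (p.map i) : N⟮β⟯) : Ω) :=
      IntermediateField.aeval_coe (S := N⟮β⟯) (R := N) ⟨β, hb⟩ (p.map i)
    rw [h5]
    exact Subtype.property _
  have hQmem : e Q ∈ N⟮β⟯ := by
    rw [Q.as_sum_range_C_mul_X_pow, map_sum]
    apply sum_mem
    intro j _
    rw [map_mul, map_pow, ← ht, ← hQEc]
    exact mul_mem (he'mem (QE.coeff j)) (pow_mem (IntermediateField.algebraMap_mem _ _) _)
  have hFQ : aeval (e Q) F = 0 := by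
    rw [aeval_def, eval₂_eq_eval_map, hPF, ← Polynomial.map_map, eval_map_apply, hQ, map_zero]
  have hQint : IsIntegral N (e Q) := by
    rw [← isAlgebraic_iff_isIntegral]
    exact ⟨F, hF.ne_zero, hFQ⟩
  have hmF := minpoly.eq_of_irreducible hF hFQ
  have hassoc : Associated (minpoly N (e Q)) F := by
    rw [← hmF]
    exact associated_mul_unit_left _ _ (by
      rw [isUnit_C]
      exact (inv_ne_zero (leadingCoeff_ne_zero.mpr hF.ne_zero)).isUnit)
  have hle2 : N⟮e Q⟯ ≤ N⟮β⟯ := by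
    rw [adjoin_simple_le_iff]; exact hQmem
  have hfdβ : FiniteDimensional N N⟮β⟯ := adjoin.finiteDimensional hβint
  have hd1 : Module.finrank N N⟮e Q⟯ = F.natDegree := by
    rw [adjoin.finrank hQint]
    exact natDegree_eq_of_degree_eq (degree_eq_degree_of_associated hassoc)
  have hd2 : Module.finrank N N⟮β⟯ ≤ g.natDegree := by
    rw [adjoin.finrank hβint, ← natDegree_map (f := i) (p := g)]
    exact natDegree_le_of_dvd (minpoly.dvd N β hgβ) (hgmonic.map i).ne_zero
  have hd3 : Module.finrank N N⟮β⟯ ≤ Module.finrank N N⟮e Q⟯ := by omega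
  have heq : N⟮e Q⟯ = N⟮β⟯ := eq_of_le_of_finrank_le hle2 hd3
  have hd4 : (g.map i).natDegree ≤ (minpoly N β).natDegree := by
    rw [natDegree_map, ← adjoin.finrank hβint, ← heq]; omega
  have hgmin : minpoly N β = g.map i :=
    Polynomial.eq_of_monic_of_associated (minpoly.monic hβint) (hgmonic.map i)
      (associated_of_dvd_of_natDegree_le (minpoly.dvd N β hgβ) (hgmonic.map i).ne_zero hd4)
  refine ⟨g, ?_, ?_⟩
  · rw [← hgmin]; exact minpoly.irreducible hβint
  · rw [← hgmin]
    exact ⟨(adjoinRootEquivAdjoin N hβint).trans ((IntermediateField.equivOfEq heq.symm).trans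
      ((adjoinRootEquivAdjoin N hQint).symm.trans (AdjoinRoot.algEquivOfAssociated N _ _ hassoc)))⟩

theorem rf_inj (m : ℕ) : Function.Injective (algebraMap (MvPolynomial (Fin m) ℚ) (RF m)) :=
  IsFractionRing.injective (MvPolynomial (Fin m) ℚ) (RF m)

theorem clear_denoms_aux {A L : Type} [CommRing A] [IsDomain A] [Field L] [Algebra A L]
    [IsFractionRing A L] (g : L[X]) :
    ∃ (G : A[X]) (b : A), b ≠ 0 ∧ G.map (algebraMap A L) = C (algebraMap A L b) * g := by
  obtain ⟨b, hb, hG⟩ := IsLocalization.integerNormalization_spec (nonZeroDivisors A) g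
  refine ⟨_, b, nonZeroDivisors.ne_zero hb, hG.trans ?_⟩
  ext k
  rw [coeff_smul, coeff_C_mul]
  exact Algebra.smul_def _ _

theorem map_castC (m : ℕ) (N : ℤ) :
    MvPolynomial.map (σ := Fin m) (Int.castRingHom ℚ) (MvPolynomial.C N) =
      MvPolynomial.C (N : ℚ) := by
  rw [MvPolynomial.map_C]; rfl

theorem exists_int_multiple (m : ℕ) (p : MvPolynomial (Fin m) ℚ) :
    ∃ N : ℤ, N ≠ 0 ∧ ∃ q : MvPolynomial (Fin m) ℤ,
      MvPolynomial.map (Int.castRingHom ℚ) q = MvPolynomial.C (N : ℚ) * p := by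
  induction p using MvPolynomial.induction_on with
  | C a =>
    refine ⟨a.den, by exact_mod_cast a.den_nz, MvPolynomial.C a.num, ?_⟩
    rw [MvPolynomial.map_C, ← MvPolynomial.C_mul]
    congr 1
    simp [mul_comm, Rat.mul_den_eq_num]
  | add p q hp hq =>
    obtain ⟨N, hN, p', hp'⟩ := hp
    obtain ⟨M, hM, q', hq'⟩ := hq
    refine ⟨N * M, mul_ne_zero hN hM, MvPolynomial.C M * p' + MvPolynomial.C N * q', ?_⟩
    rw [map_add, map_mul, map_mul, map_castC, map_castC, hp', hq', Int.cast_mul,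
      MvPolynomial.C_mul]
    ring
  | mul_X p i hp =>
    obtain ⟨N, hN, p', hp'⟩ := hp
    refine ⟨N, hN, p' * MvPolynomial.X i, ?_⟩
    simp only [map_mul, MvPolynomial.map_X, hp']
    ring

/-- The map `ℤ[X] → ℚ(X)`. -/
def jm (m : ℕ) : MvPolynomial (Fin m) ℤ →+* RF m :=
  (algebraMap (MvPolynomial (Fin m) ℚ) (RF m)).comp (MvPolynomial.map (Int.castRingHom ℚ))

theorem jm_injective (m : ℕ) : Function.Injective (jm m) :=
  (IsFractionRing.injective (MvPolynomial (Fin m) ℚ) (RF m)).comp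
    (MvPolynomial.map_injective _ Int.cast_injective)

theorem clear_denoms (m : ℕ) (g : (RF m)[X]) :
    ∃ (G : (MvPolynomial (Fin m) ℤ)[X]) (b : RF m), b ≠ 0 ∧ G.map (jm m) = C b * g := by
  let alg : Algebra (MvPolynomial (Fin m) ℤ) (RF m) := (jm m).toAlgebra
  have hinj : Function.Injective (algebraMap (MvPolynomial (Fin m) ℤ) (RF m)) := jm_injective m
  have hfs : FaithfulSMul (MvPolynomial (Fin m) ℤ) (RF m) :=
    (faithfulSMul_iff_algebraMap_injective _ _).mpr hinj
  have hfr : IsFractionRing (MvPolynomial (Fin m) ℤ) (RF m) := by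
    apply IsFractionRing.of_field
    intro z
    obtain ⟨a, b, hb, rfl⟩ := IsFractionRing.div_surjective (A := MvPolynomial (Fin m) ℚ) z
    have hb0 := nonZeroDivisors.ne_zero hb
    obtain ⟨N, hN, a', ha'⟩ := exists_int_multiple m a
    obtain ⟨M, hM, b', hb'⟩ := exists_int_multiple m b
    refine ⟨MvPolynomial.C M * a', MvPolynomial.C N * b', ?_⟩
    change _ = jm m _ / jm m _
    have hNM : ∀ (L : ℤ), L ≠ 0 → algebraMap (MvPolynomial (Fin m) ℚ) (RF m)
        (MvPolynomial.C (L : ℚ)) ≠ 0 := by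
      intro L hL
      rw [map_ne_zero_iff _ (IsFractionRing.injective (MvPolynomial (Fin m) ℚ) (RF m))]
      simpa using hL
    have h1 := hNM N hN
    have h2 := hNM M hM
    have h3 : algebraMap (MvPolynomial (Fin m) ℚ) (RF m) b ≠ 0 :=
      (map_ne_zero_iff _ (IsFractionRing.injective (MvPolynomial (Fin m) ℚ) (RF m))).mpr hb0
    simp only [jm, RingHom.comp_apply, map_mul, ha', hb', map_castC]
    rw [div_eq_div_iff h3 (mul_ne_zero h1 (mul_ne_zero h2 h3))]
    ring
  obtain ⟨G, b, hb, hG⟩ := clear_denoms_aux (A := MvPolynomial (Fin m) ℤ) g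
  exact ⟨G, jm m b, (map_ne_zero_iff _ (jm_injective m)).mpr hb, hG⟩

theorem irr_toFrac {n : ℕ} (F : (MvPolynomial (Fin n) ℤ)[X]) (hF : AbsIrred F)
    (hd : F.natDegree ≠ 0) : Irreducible (toFrac F) := by
  have hinjZ : Function.Injective (MvPolynomial.map (σ := Fin n) (Int.castRingHom ℚ)) :=
    MvPolynomial.map_injective _ Int.cast_injective
  let f : MvPolynomial (Fin n) ℚ →+* MvPolynomial (Fin n) (AlgebraicClosure ℚ) :=
    MvPolynomial.map (algebraMap ℚ (AlgebraicClosure ℚ))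
  have hf : Function.Injective f := MvPolynomial.map_injective _ (algebraMap ℚ _).injective
  have hcomp : F.map (MvPolynomial.map (Int.castRingHom (AlgebraicClosure ℚ))) = (toQ F).map f := by
    rw [toQ, Polynomial.map_map]
    congr 1
    apply MvPolynomial.ringHom_ext
    · intro r; simp [f]
    · intro i; simp [f]
  have hF' : Irreducible ((toQ F).map f) := hcomp ▸ hF
  have hunit : ∀ p : (MvPolynomial (Fin n) ℚ)[X], IsUnit (p.map f) → IsUnit p := by
    intro p hp
    rw [Polynomial.isUnit_iff] at hp ⊢
    obtain ⟨r, hr, hrp⟩ := hp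
    have hnd : p.natDegree = 0 := by
      rw [← natDegree_map_eq_of_injective hf, ← hrp, natDegree_C]
    rw [natDegree_eq_zero] at hnd
    obtain ⟨c, rfl⟩ := hnd
    refine ⟨c, ?_, rfl⟩
    rw [map_C] at hrp
    have hrc := C_injective hrp
    subst hrc
    rw [MvPolynomial.isUnit_iff_eq_C_of_isReduced] at hr ⊢
    obtain ⟨s, hs, hsc⟩ := hr
    have htd : c.totalDegree = 0 := by
      have h1 : (f c).totalDegree = 0 := by rw [hsc, MvPolynomial.totalDegree_C]
      rw [MvPolynomial.totalDegree_eq_zero_iff_eq_C] at h1 ⊢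
      apply hf
      rw [h1, MvPolynomial.coeff_map, MvPolynomial.map_C]
    rw [MvPolynomial.totalDegree_eq_zero_iff_eq_C] at htd
    refine ⟨_, ?_, htd⟩
    rw [isUnit_iff_ne_zero]
    intro h0
    rw [h0, map_zero] at htd
    rw [htd, map_zero] at hsc
    exact hs.ne_zero (MvPolynomial.C_injective _ _ (by rw [← hsc, map_zero]))
  have hirrQ : Irreducible (toQ F) := by
    refine ⟨fun h => hF'.not_isUnit (h.map (mapRingHom f)), fun a b hab => ?_⟩
    have := hF'.isUnit_or_isUnit (a := a.map f) (b := b.map f) (by rw [hab, Polynomial.map_mul])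
    exact this.imp (hunit a) (hunit b)
  have hdQ : (toQ F).natDegree ≠ 0 := by
    rw [toQ, natDegree_map_eq_of_injective hinjZ]; exact hd
  have hprim : (toQ F).IsPrimitive := hirrQ.isPrimitive hdQ
  let _ : NormalizedGCDMonoid (MvPolynomial (Fin n) ℚ) := Nonempty.some inferInstance
  exact (hprim.irreducible_iff_irreducible_map_fraction_map (K := RF n)).mp hirrQ

set_option maxHeartbeats 2000000 in
set_option synthInstance.maxHeartbeats 200000 in
theorem generic (m : ℕ) (F : (MvPolynomial (Fin (m + 1)) ℤ)[X]) (hF : IsGenuinePoly F)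
    (K : Type) [Field K] [IsAlgClosed K] [Algebra (RF m) K] [Algebra.IsAlgebraic (RF m) K]
    (Q : K[X]) :
    eval Q ((F.map (MvPolynomial.finSuccEquiv ℤ m).toRingHom).map
      (mapRingHom ((algebraMap (RF m) K).comp (jm m)))) ≠ 0 := by
  have hψ : Function.Injective ((algebraMap (RF m) K).comp (jm m)) :=
    (algebraMap (RF m) K).injective.comp (jm_injective m)
  have hfs : Function.Injective (MvPolynomial.finSuccEquiv ℤ m).toRingHom :=
    (MvPolynomial.finSuccEquiv ℤ m).injective
  have hF0 : F ≠ 0 := by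
    rintro rfl
    have := hF.1.ne_zero
    simp at this
  by_cases hd : F.natDegree = 0
  · obtain ⟨c, rfl⟩ := natDegree_eq_zero.mp hd
    have hc : c ≠ 0 := by rintro rfl; simp at hF0
    rw [map_C, map_C, eval_C]
    exact (map_ne_zero_iff _ (map_injective _ hψ)).mpr ((map_ne_zero_iff _ hfs).mpr hc)
  intro hQ
  have hirr := irr_toFrac F hF.1 hd
  have hi0 : Function.Injective ((algebraMap (MvPolynomial (Fin (m + 1)) ℚ) (RF (m + 1))).comp
      (MvPolynomial.rename (R := ℚ) (Fin.succ : Fin m → Fin (m + 1))).toRingHom) :=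
    (rf_inj (m + 1)).comp
      (MvPolynomial.rename_injective _ (Fin.succ_injective m))
  let i : RF m →+* RF (m + 1) := IsFractionRing.lift hi0
  let f : MvPolynomial (Fin m) ℚ →+* K :=
    (algebraMap (RF m) K).comp (algebraMap (MvPolynomial (Fin m) ℚ) (RF m))
  have hf : Function.Injective f := (algebraMap (RF m) K).injective.comp
    (IsFractionRing.injective (MvPolynomial (Fin m) ℚ) (RF m))
  let e : K[X] →+* FractionRing K[X] := algebraMap K[X] (FractionRing K[X])
  have he : Function.Injective e := IsFractionRing.injective K[X] (FractionRing K[X])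
  let l : MvPolynomial (Fin (m + 1)) ℚ →+* FractionRing K[X] :=
    (e.comp (mapRingHom f)).comp (MvPolynomial.finSuccEquiv ℚ m).toRingHom
  have hl : Function.Injective l :=
    (he.comp (map_injective f hf)).comp (MvPolynomial.finSuccEquiv ℚ m).injective
  let j : RF (m + 1) →+* FractionRing K[X] := IsFractionRing.lift hl
  let _ : Algebra (RF (m + 1)) (FractionRing K[X]) := j.toAlgebra
  have hj : ∀ p, j (algebraMap (MvPolynomial (Fin (m + 1)) ℚ) (RF (m + 1)) p) = l p :=
    fun p => IsFractionRing.lift_algebraMap hl p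
  have hi : ∀ p, i (algebraMap (MvPolynomial (Fin m) ℚ) (RF m) p) =
      algebraMap (MvPolynomial (Fin (m + 1)) ℚ) (RF (m + 1)) (MvPolynomial.rename Fin.succ p) :=
    fun p => IsFractionRing.lift_algebraMap hi0 p
  have hl0 : l (MvPolynomial.X 0) = e X := by
    simp [l, MvPolynomial.finSuccEquiv_X_zero]
  have hls : ∀ s : Fin m, l (MvPolynomial.X s.succ) = e (C (f (MvPolynomial.X s))) := by
    intro s
    simp [l, MvPolynomial.finSuccEquiv_X_succ]
  let P : (RF m)[X][X] := (F.map (MvPolynomial.finSuccEquiv ℤ m).toRingHom).map (mapRingHom (jm m))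
  have hjinj : Function.Injective (mapRingHom (jm m)) := map_injective _ (jm_injective m)
  obtain ⟨g, hg1, ⟨eqv⟩⟩ := descend (k := RF m) (K := K) (N := RF (m + 1)) (Ω := FractionRing K[X])
    i e (algebraMap _ _ (MvPolynomial.X 0)) ((hj _).trans hl0)
    (by
      have : j.comp i = (e.comp C).comp (algebraMap (RF m) K) := by
        apply IsLocalization.ringHom_ext (nonZeroDivisors (MvPolynomial (Fin m) ℚ))
        apply MvPolynomial.ringHom_ext
        · intro r
          simp only [RingHom.comp_apply, hi, hj]
          simp [l, f, MvPolynomial.finSuccEquiv_apply]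
        · intro s
          simp only [RingHom.comp_apply, hi, hj, MvPolynomial.rename_X, hls]
          rfl
      exact fun a => RingHom.congr_fun this a)
    P (toFrac F) hirr
    (by
      rw [natDegree_map_eq_of_injective hjinj, natDegree_map_eq_of_injective hfs, toFrac, toFracQ,
        toQ, natDegree_map_eq_of_injective (rf_inj (m + 1)),
        natDegree_map_eq_of_injective (MvPolynomial.map_injective _ Int.cast_injective)])
    ((Polynomial.map_ne_zero_iff hjinj).mpr ((Polynomial.map_ne_zero_iff hfs).mpr hF0))
    (by
      change (toFrac F).map j = _
      rw [toFrac, toFracQ, toQ, Polynomial.map_map, Polynomial.map_map, Polynomial.map_map,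
        Polynomial.map_map]
      congr 1
      apply MvPolynomial.ringHom_ext
      · intro r; simp
      · intro s
        simp only [RingHom.comp_apply, MvPolynomial.map_X, hj]
        refine Fin.cases ?_ (fun s => ?_) s
        · rw [hl0]; simp [MvPolynomial.finSuccEquiv_X_zero]
        · rw [hls]; simp [MvPolynomial.finSuccEquiv_X_succ, f, jm])
    Q
    (by
      rw [Polynomial.map_map, mapRingHom_comp]
      exact hQ)
  obtain ⟨G', b, hb, hG'⟩ := clear_denoms m g
  let G : (MvPolynomial (Fin (m + 1)) ℤ)[X] :=
    G'.map (MvPolynomial.rename (R := ℤ) (Fin.succ : Fin m → Fin (m + 1))).toRingHom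
  have hG : toFrac G = C (i b) * g.map i := by
    have h1 : toFrac G = (G'.map (jm m)).map i := by
      rw [toFrac, toFracQ, toQ, Polynomial.map_map, Polynomial.map_map, Polynomial.map_map]
      congr 1
      apply MvPolynomial.ringHom_ext
      · intro r; simp
      · intro s
        simp [jm, hi]
    rw [h1, hG', Polynomial.map_mul, map_C]
  have hassoc : Associated (toFrac G) (g.map i) := by
    rw [hG]
    exact associated_unit_mul_left _ _ (isUnit_C.mpr ((map_ne_zero i).mpr hb).isUnit)
  have := (hF.2 G (hassoc.irreducible_iff.mpr hg1)
    ⟨(AdjoinRoot.algEquivOfAssociated _ _ _ hassoc).trans eqv⟩).2 0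
  apply this.ne'
  rw [degX, Finset.sup_eq_zero]
  intro k _
  rw [coeff_map]
  by_contra h0
  have h0' := Nat.pos_of_ne_zero h0
  have hv : (0 : Fin (m + 1)) ∈ (MvPolynomial.rename (R := ℤ) Fin.succ (G'.coeff k)).vars := by
    classical
    rw [MvPolynomial.degreeOf_def] at h0'
    rw [MvPolynomial.vars_def, Multiset.mem_toFinset]
    exact Multiset.count_pos.mp h0'
  classical
  have := MvPolynomial.vars_rename _ _ hv
  simp [Fin.succ_ne_zero] at this

theorem natDegree_root_le {L : Type} [Field L] (D : ℕ) (Q : L[X]) :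
    ∀ (N : ℕ) (P : L[X][X]), P.natDegree ≤ N → P ≠ 0 → (∀ k, (P.coeff k).natDegree ≤ D) →
      eval Q P = 0 → Q.natDegree ≤ D := by
  intro N
  induction N with
  | zero =>
    intro P hN hP hD hQ
    rw [eq_C_of_natDegree_le_zero hN, eval_C] at hQ
    exact absurd (by rw [eq_C_of_natDegree_le_zero hN, hQ, C_0]) hP
  | succ N ih =>
    intro P hN hP hD hQ
    by_cases h0 : P.coeff 0 = 0
    · have hX : P.divX * X = P := by
        have := divX_mul_X_add P
        rwa [h0, C_0, add_zero] at this
      have hdiv : P.divX ≠ 0 := by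
        intro h; rw [h, zero_mul] at hX; exact hP hX.symm
      rw [← hX, eval_mul, eval_X, mul_eq_zero] at hQ
      rcases hQ with hQ | hQ
      · refine ih P.divX ?_ hdiv (fun k => ?_) hQ
        · rw [natDegree_divX_eq_natDegree_tsub_one]; omega
        · rw [coeff_divX]; exact hD _
      · rw [hQ]; simp
    · have hdvd : Q ∣ P.coeff 0 := by
        have := divX_mul_X_add P
        rw [← this, eval_add, eval_mul, eval_X, eval_C] at hQ
        exact ⟨-eval Q P.divX, by linear_combination hQ⟩
      exact (natDegree_le_of_dvd hdvd h0).trans (hD 0)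

/-- A bad specialization gives a root. -/
theorem bad_root (m : ℕ) (F : (MvPolynomial (Fin (m + 1)) ℤ)[X])
    (x : {i : Fin (m + 1) // i ≠ 0} → ℤ) (hx : HasLinearFactorY (substKeepFirst 0 x F)) :
    ∃ Q : (AlgebraicClosure ℚ)[X],
      eval Q ((F.map (MvPolynomial.finSuccEquiv ℤ m).toRingHom).map
        (mapRingHom ((Int.castRingHom (AlgebraicClosure ℚ)).comp
          (MvPolynomial.eval fun j : Fin m => x ⟨j.succ, Fin.succ_ne_zero j⟩)))) = 0 := by
  obtain ⟨Q, H, hQH⟩ := hx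
  let φ : MvPolynomial (Fin (m + 1)) (AlgebraicClosure ℚ) →+* (AlgebraicClosure ℚ)[X] :=
    MvPolynomial.eval₂Hom C (fun _ => X)
  have hmap : (F.map (MvPolynomial.finSuccEquiv ℤ m).toRingHom).map
        (mapRingHom ((Int.castRingHom (AlgebraicClosure ℚ)).comp
          (MvPolynomial.eval fun j : Fin m => x ⟨j.succ, Fin.succ_ne_zero j⟩))) =
      (substKeepFirst 0 x F).map φ := by
    rw [substKeepFirst, Polynomial.map_map, Polynomial.map_map]
    congr 1
    apply MvPolynomial.ringHom_ext
    · intro r; simp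
    · intro s
      refine Fin.cases ?_ (fun s => ?_) s
      · simp [φ, MvPolynomial.finSuccEquiv_X_zero]
      · have hc := map_intCast φ (x ⟨s.succ, Fin.succ_ne_zero s⟩)
        simp [φ, MvPolynomial.finSuccEquiv_X_succ, Fin.succ_ne_zero]
        exact hc.symm
  refine ⟨φ Q, ?_⟩
  rw [hmap, hQH, Polynomial.map_mul, eval_mul]
  simp

theorem deg_hyps (m : ℕ) (F : (MvPolynomial (Fin (m + 1)) ℤ)[X]) (D : ℕ) (hD : totalDeg F = D) :
    (F.map (MvPolynomial.finSuccEquiv ℤ m).toRingHom).natDegree ≤ D ∧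
    (∀ k, ((F.map (MvPolynomial.finSuccEquiv ℤ m).toRingHom).coeff k).natDegree ≤ D) ∧
    (∀ k l, (((F.map (MvPolynomial.finSuccEquiv ℤ m).toRingHom).coeff k).coeff l).totalDegree
      ≤ D) := by
  have key : ∀ k, F.coeff k ≠ 0 → k + (F.coeff k).totalDegree ≤ D := by
    intro k hk
    rw [← hD]
    exact Finset.le_sup (f := fun k => k + (F.coeff k).totalDegree) (mem_support_iff.mpr hk)
  have key2 : ∀ k, (F.coeff k).totalDegree ≤ D := by
    intro k
    by_cases hk : F.coeff k = 0
    · rw [hk]; simp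
    · exact (Nat.le_add_left _ _).trans (key k hk)
  refine ⟨natDegree_map_le.trans ?_, fun k => ?_, fun k l => ?_⟩
  · by_cases h0 : F = 0
    · rw [h0]; simp
    · exact (Nat.le_add_right _ _).trans (key F.natDegree (by simpa using h0))
  · rw [coeff_map]
    change (MvPolynomial.finSuccEquiv ℤ m (F.coeff k)).natDegree ≤ D
    rw [MvPolynomial.natDegree_finSuccEquiv]
    exact (MvPolynomial.degreeOf_le_totalDegree _ _).trans (key2 k)
  · rw [coeff_map]
    change ((MvPolynomial.finSuccEquiv ℤ m (F.coeff k)).coeff l).totalDegree ≤ D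
    by_cases h0 : (MvPolynomial.finSuccEquiv ℤ m (F.coeff k)).coeff l = 0
    · rw [h0]; simp
    · have := MvPolynomial.totalDegree_coeff_finSuccEquiv_add_le (F.coeff k) l h0
      have := key2 k
      omega

/-- Counting integral zeros in a box. -/
theorem count_zeros (k : ℕ) (h : MvPolynomial (Fin (k + 1)) ℤ) (hh : h ≠ 0) (B : ℝ) (hB : 1 ≤ B) :
    ((Finset.card {f ∈ Fintype.piFinset fun _ : Fin (k + 1) => Finset.Icc (-⌊B⌋) ⌊B⌋ |
      MvPolynomial.eval f h = 0} : ℕ) : ℝ) ≤ h.totalDegree * (3 * B) ^ k := by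
  have hfl : 1 ≤ ⌊B⌋ := Int.le_floor.mpr (by exact_mod_cast hB)
  have hcard : ((Finset.card (Finset.Icc (-⌊B⌋) ⌊B⌋) : ℕ) : ℤ) = 2 * ⌊B⌋ + 1 := by
    rw [Int.card_Icc]; omega
  have hpos : 0 < Finset.card (Finset.Icc (-⌊B⌋) ⌊B⌋) := by omega
  have hle : ((Finset.card (Finset.Icc (-⌊B⌋) ⌊B⌋) : ℕ) : ℝ) ≤ 3 * B := by
    have h1 : ((Finset.card (Finset.Icc (-⌊B⌋) ⌊B⌋) : ℕ) : ℝ) = 2 * (⌊B⌋ : ℝ) + 1 := by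
      exact_mod_cast hcard
    have := Int.floor_le B
    rw [h1]; linarith
  have sz := MvPolynomial.schwartz_zippel_totalDegree hh (Finset.Icc (-⌊B⌋) ⌊B⌋)
  generalize Finset.card (Finset.Icc (-⌊B⌋) ⌊B⌋) = s at *
  generalize Finset.card {f ∈ Fintype.piFinset fun _ : Fin (k + 1) => Finset.Icc (-⌊B⌋) ⌊B⌋ |
      MvPolynomial.eval f h = 0} = c at *
  have hsq : (0 : ℚ≥0) < s := by exact_mod_cast hpos
  rw [div_le_div_iff₀ (pow_pos hsq _) hsq, pow_succ, ← mul_assoc] at sz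
  have sz2 := le_of_mul_le_mul_right sz hsq
  have sz3 : c ≤ h.totalDegree * s ^ k := by exact_mod_cast sz2
  calc (c : ℝ) ≤ h.totalDegree * (s : ℝ) ^ k := by exact_mod_cast sz3
    _ ≤ _ := by gcongr

theorem main_aux (k D : ℕ) :
    ∃ C : ℝ, 0 < C ∧
      ∀ F : Polynomial (MvPolynomial (Fin (k + 2)) ℤ), IsGenuinePoly F → totalDeg F = D →
        ∀ B : ℝ, 1 ≤ B →
          (Set.ncard {x : {i : Fin (k + 2) // i ≠ 0} → ℤ |
              (∀ i, |(x i : ℝ)| ≤ B) ∧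
              HasLinearFactorY (substKeepFirst 0 x F)} : ℝ) ≤ C * B ^ k := by
  obtain ⟨M, hM⟩ := uniform D
  refine ⟨(M + 1) * 3 ^ k, by positivity, ?_⟩
  intro F hF hD B hB
  obtain ⟨h1, h2, h3⟩ := deg_hyps (k + 1) F D hD
  obtain ⟨h, hh0, hhM, hh⟩ := hM (k + 1) _ h1 h2 h3 (AlgebraicClosure (RF (k + 1)))
    ((algebraMap (RF (k + 1)) (AlgebraicClosure (RF (k + 1)))).comp (jm (k + 1)))
    ((algebraMap (RF (k + 1)) (AlgebraicClosure (RF (k + 1)))).injective.comp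
      (jm_injective (k + 1)))
    (fun Q => generic (k + 1) F hF _ Q)
  have hcount := count_zeros k h hh0 B hB
  let r : ({i : Fin (k + 2) // i ≠ 0} → ℤ) → (Fin (k + 1) → ℤ) :=
    fun x j => x ⟨j.succ, Fin.succ_ne_zero j⟩
  have hr : Function.Injective r := by
    intro x y hxy
    funext ⟨i, hi⟩
    obtain ⟨j, rfl⟩ := Fin.exists_succ_eq.mpr hi
    exact congrFun hxy j
  have hncard : Set.ncard {x : {i : Fin (k + 2) // i ≠ 0} → ℤ |
      (∀ i, |(x i : ℝ)| ≤ B) ∧ HasLinearFactorY (substKeepFirst 0 x F)} ≤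
      Finset.card {f ∈ Fintype.piFinset fun _ : Fin (k + 1) => Finset.Icc (-⌊B⌋) ⌊B⌋ |
        MvPolynomial.eval f h = 0} := by
    rw [← Set.ncard_coe_finset]
    refine Set.ncard_le_ncard_of_injOn r ?_ hr.injOn (Finset.finite_toSet _)
    rintro x ⟨hxB, hx⟩
    rw [Finset.mem_coe, Finset.mem_filter, Fintype.mem_piFinset]
    constructor
    · intro j
      have := abs_le.mp (hxB ⟨j.succ, Fin.succ_ne_zero j⟩)
      rw [Finset.mem_Icc]
      constructor
      · rw [neg_le]
        apply Int.le_floor.mpr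
        push_cast
        linarith [this.1]
      · exact Int.le_floor.mpr this.2
    · obtain ⟨Q, hQ⟩ := bad_root (k + 1) F x hx
      have hz : ∃ Q : (AlgebraicClosure ℚ)[X], Q.natDegree ≤ D ∧
          eval Q ((F.map (MvPolynomial.finSuccEquiv ℤ (k + 1)).toRingHom).map
          (mapRingHom ((Int.castRingHom (AlgebraicClosure ℚ)).comp
            (MvPolynomial.eval (r x))))) = 0 := by
        by_cases hP : (F.map (MvPolynomial.finSuccEquiv ℤ (k + 1)).toRingHom).map
          (mapRingHom ((Int.castRingHom (AlgebraicClosure ℚ)).comp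
            (MvPolynomial.eval (r x)))) = 0
        · exact ⟨0, by simp, by rw [hP, eval_zero]⟩
        · refine ⟨Q, natDegree_root_le D Q _ _ le_rfl hP (fun l => ?_) hQ, hQ⟩
          rw [coeff_map]
          exact natDegree_map_le.trans (h2 l)
      obtain ⟨Q', hQ'D, hQ'⟩ := hz
      have := hh (AlgebraicClosure ℚ) _ Q' hQ'D hQ'
      rw [RingHom.comp_apply] at this
      exact (map_eq_zero_iff _ Int.cast_injective).mp this
  calc _ ≤ _ := (Nat.cast_le (α := ℝ)).mpr hncard
    _ ≤ _ := hcount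
    _ ≤ ((M : ℝ) + 1) * (3 * B) ^ k := by
      have : (h.totalDegree : ℝ) ≤ M := by exact_mod_cast hhM
      gcongr
      linarith
    _ = _ := by rw [mul_pow]; ring

theorem statement13 (n : ℕ) (hn : 2 ≤ n) (D : ℕ) :
    ∃ C : ℝ, 0 < C ∧
      ∀ F : Polynomial (MvPolynomial (Fin n) ℤ), IsGenuinePoly F → totalDeg F = D →
        ∀ B : ℝ, 1 ≤ B →
          (Set.ncard {x : {i : Fin n // i ≠ (⟨0, by omega⟩ : Fin n)} → ℤ |
              (∀ i, |(x i : ℝ)| ≤ B) ∧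
              HasLinearFactorY (substKeepFirst (⟨0, by omega⟩ : Fin n) x F)} : ℝ) ≤
            C * B ^ ((n : ℝ) - 2) := by
  obtain ⟨k, rfl⟩ := Nat.exists_eq_add_of_le' hn
  obtain ⟨C, hC, h⟩ := main_aux k D
  refine ⟨C, hC, fun F hF hD B hB => ?_⟩
  have he : (((k + 2 : ℕ) : ℝ) - 2) = (k : ℝ) := by push_cast; ring
  rw [he, Real.rpow_natCast]
  exact h F hF hD B hB
end
end
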